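/- arXiv:1503.04038 — 3 statements merged into one kernel-verified Lean document; each statement's English description precedes it below -/
import Mathlib

section
/- Fix positive real numbers α and β with αβ = 4, and let s be a real number with s ∉ αℤ. If f ∈ L¹((0,∞), ℂ) satisfies ∫₀^∞ e^{iπαmt} f(t) dt = 0 for all m ∈ ℤ, ∫₀^∞ e^{−iπβn/t} f(t) dt = 0 for all n ∈ ℤ, and additionally ∫₀^∞ e^{iπst} f(t) dt = 0, then f = 0 almost everywhere on (0,∞). -/
open MeasureTheory Real

/-!
After rescaling to `α = β = 2`, uniqueness of Fourier coefficients on the circle says that the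
measure `f(x) dx` and its image under `x ↦ 1/x` both push forward to zero under the fractional
part. With `g(x) = x⁻² f(1/x)` and the transfer operator `P` of the Gauss map, this reads
`f = -P g` and `g = -P f` on `(0, 1)`, so `f` and `g` are densities invariant under the second
iterate of the Gauss map. The Gauss map is mixing: normalised by the invariant density, its
transfer operator turns increasing functions into decreasing ones and shrinks their oscillation by
the factor `2/3`. Hence `f = c / (1 + x)` and `g = -c / (1 + x)` on `(0, 1)`, which leaves a
one-dimensional space of candidates for `f`. Its generator has the Fourier transform
`(exp (iω) - 1) * ∫₀^∞ exp (-u) / (iω - u) du`, where the integral never vanishes: up to a phase it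
is a point of the Nielsen spiral or of its mirror image. At the extra frequency the first factor
does not vanish either, so `c = 0`.
-/

open Set Filter Topology
open scoped Pointwise

section FourierUniqueness

variable {X : Type*} [MeasurableSpace X] {μ : Measure X}

theorem setIntegral_preimage_eq_zero_of_forall_isClosed {Y E : Type*} [TopologicalSpace Y]
    [MeasurableSpace Y] [BorelSpace Y] [NormedAddCommGroup E] [NormedSpace ℝ E] {q : X → Y}
    (hq : Measurable q) {f : X → E} (hf : Integrable f μ)
    (h : ∀ s, IsClosed s → ∫ x in q ⁻¹' s, f x ∂μ = 0) {s : Set Y} (hs : MeasurableSet s) :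
    ∫ x in q ⁻¹' s, f x ∂μ = 0 := by
  induction s, hs using MeasurableSpace.induction_on_inter
    ((BorelSpace.measurable_eq (α := Y)).trans borel_eq_generateFrom_isClosed)
    isPiSystem_isClosed with
  | empty => simp
  | basic s hs => exact h s hs
  | compl s hs ih =>
    have huniv : ∫ x, f x ∂μ = 0 := by simpa using h univ isClosed_univ
    rw [preimage_compl, setIntegral_compl (hq hs) hf, ih, huniv, sub_zero]
  | iUnion s hdisj hs ih =>
    rw [preimage_iUnion, integral_iUnion (fun i => hq (hs i))
      (fun i j hij => (hdisj hij).preimage q) hf.integrableOn]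
    simp only [ih, tsum_zero]

theorem setIntegral_preimage_eq_zero_of_forall_continuous {Y : Type*} [TopologicalSpace Y]
    [HasOuterApproxClosed Y] [MeasurableSpace Y] [BorelSpace Y] {q : X → Y} (hq : Measurable q)
    {f : X → ℂ} (hf : Integrable f μ)
    (h : ∀ F : C(Y, ℂ), ∫ x, F (q x) * f x ∂μ = 0) {s : Set Y} (hs : MeasurableSet s) :
    ∫ x in q ⁻¹' s, f x ∂μ = 0 := by
  refine setIntegral_preimage_eq_zero_of_forall_isClosed hq hf (fun s hs => ?_) hs
  let F (n : ℕ) : C(Y, ℂ) := ⟨fun y => (hs.apprSeq n y : ℝ), by fun_prop⟩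
  have hlim : Tendsto (fun n => ∫ x, F n (q x) * f x ∂μ) atTop
      (𝓝 (∫ x, (q ⁻¹' s).indicator f x ∂μ)) := by
    refine tendsto_integral_of_dominated_convergence (fun x => ‖f x‖)
      (fun n => ((F n).continuous.measurable.comp hq).aestronglyMeasurable.mul hf.1) hf.norm
      (fun n => ae_of_all _ fun x => ?_) (ae_of_all _ fun x => ?_)
    · rw [norm_mul, ContinuousMap.coe_mk, Complex.norm_real, NNReal.norm_eq]
      exact mul_le_of_le_one_left (norm_nonneg _)
        (mod_cast HasOuterApproxClosed.apprSeq_apply_le_one hs n (q x))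
    · have hF := tendsto_pi_nhds.1 (HasOuterApproxClosed.tendsto_apprSeq hs) (q x)
      have hFc := (Complex.continuous_ofReal.tendsto _).comp
        ((NNReal.continuous_coe.tendsto _).comp hF)
      have heq : (q ⁻¹' s).indicator f x = ((s.indicator 1 (q x) : NNReal) : ℝ) * f x := by
        by_cases hx : q x ∈ s <;> simp [hx]
      rw [heq]
      exact hFc.mul_const (f x)
  rw [← integral_indicator (hq hs.measurableSet)]
  exact tendsto_nhds_unique hlim (by simp only [h, tendsto_const_nhds])

theorem integral_continuousMap_mul_eq_zero_of_fourier {T : ℝ} [Fact (0 < T)]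
    {q : X → AddCircle T} (hq : Measurable q) {f : X → ℂ} (hf : Integrable f μ)
    (h : ∀ m : ℤ, ∫ x, fourier m (q x) * f x ∂μ = 0) (F : C(AddCircle T, ℂ)) :
    ∫ x, F (q x) * f x ∂μ = 0 := by
  have hint (F : C(AddCircle T, ℂ)) : Integrable (fun x => F (q x) * f x) μ :=
    hf.bdd_mul (F.continuous.measurable.comp hq).aestronglyMeasurable
      (ae_of_all _ fun x => F.norm_coe_le_norm _)
  let Λ : C(AddCircle T, ℂ) →L[ℂ] ℂ := LinearMap.mkContinuous
    { toFun := fun F => ∫ x, F (q x) * f x ∂μ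
      map_add' := fun F G => by
        simp only [ContinuousMap.add_apply, add_mul, integral_add (hint F) (hint G)]
      map_smul' := fun c F => by
        simp only [ContinuousMap.smul_apply, smul_eq_mul, mul_assoc, RingHom.id_apply,
          integral_const_mul] }
    (∫ x, ‖f x‖ ∂μ) fun F => by
      rw [mul_comm, ← integral_const_mul]
      refine norm_integral_le_of_norm_le (hf.norm.const_mul _) (ae_of_all _ fun x => ?_)
      rw [norm_mul]
      gcongr
      exact F.norm_coe_le_norm _
  have hΛ : Λ = 0 := by
    refine ContinuousLinearMap.ext_on
      ((Submodule.dense_iff_topologicalClosure_eq_top).2 span_fourier_closure_eq_top) ?_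
    rintro _ ⟨m, rfl⟩
    exact h m
  exact DFunLike.congr_fun hΛ F

theorem setIntegral_preimage_fract_eq_zero {τ : X → ℝ} (hτ : Measurable τ) {f : X → ℂ}
    (hf : Integrable f μ)
    (h : ∀ m : ℤ, ∫ x, Complex.exp (2 * π * Complex.I * m * τ x) * f x ∂μ = 0)
    {s : Set ℝ} (hs : MeasurableSet s) :
    ∫ x in (fun x => Int.fract (τ x)) ⁻¹' s, f x ∂μ = 0 := by
  have hq : Measurable fun x => (τ x : UnitAddCircle) := AddCircle.measurable_mk'.comp hτ
  let r (y : UnitAddCircle) : ℝ := AddCircle.measurableEquivIco 1 0 y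
  have hr : Measurable r :=
    measurable_subtype_coe.comp (AddCircle.measurableEquivIco (1 : ℝ) 0).measurable
  have hfract : (fun x => Int.fract (τ x)) = r ∘ fun x => (τ x : UnitAddCircle) := by
    funext x
    have h := AddCircle.coe_equivIco_mk_apply (p := (1 : ℝ)) (τ x)
    rw [div_one, mul_one] at h
    exact h.symm
  rw [hfract, preimage_comp]
  refine setIntegral_preimage_eq_zero_of_forall_continuous hq hf
    (integral_continuousMap_mul_eq_zero_of_fourier hq hf fun m => ?_) (hr hs)
  simpa [fourier_coe_apply] using h m

end FourierUniqueness

section ChangeOfVariables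

theorem ae_imp_of_mem_image_of_differentiableOn {E : Type*} [NormedAddCommGroup E]
    [NormedSpace ℝ E] [FiniteDimensional ℝ E] [MeasurableSpace E] [BorelSpace E] {μ : Measure E}
    [μ.IsAddHaarMeasure] {φ : E → E} {s : Set E} (hφ : DifferentiableOn ℝ φ s) {p : E → Prop}
    (h : ∀ᵐ x ∂μ, x ∈ s → p (φ x)) : ∀ᵐ y ∂μ, y ∈ φ '' s → p y := by
  have hnull : μ (φ '' (s ∩ {x | ¬ p (φ x)})) = 0 := by
    refine addHaar_image_eq_zero_of_differentiableOn_of_addHaar_eq_zero μ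
      (hφ.mono inter_subset_left) ?_
    simpa only [ae_iff, Classical.not_imp] using! h
  refine ae_iff.2 (measure_mono_null ?_ hnull)
  rintro _ h'
  obtain ⟨⟨x, hx, rfl⟩, hp⟩ := Classical.not_imp.1 h'
  exact ⟨x, ⟨hx, hp⟩, rfl⟩

variable {E : Type*} [NormedAddCommGroup E] [NormedSpace ℝ E]

/-- The density of the image of the measure `f(x) dx` under `x ↦ 1/x`. -/
noncomputable def invDensity (f : ℝ → E) (x : ℝ) : E := (x ^ 2)⁻¹ • f x⁻¹

theorem abs_neg_inv_sq (x : ℝ) : |-(x ^ 2)⁻¹| = (x ^ 2)⁻¹ := by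
  rw [abs_neg, abs_of_nonneg (by positivity)]

theorem setIntegral_inv {s : Set ℝ} (hs : MeasurableSet s) (h0 : (0 : ℝ) ∉ s) (f : ℝ → E) :
    ∫ x in s⁻¹, f x = ∫ x in s, invDensity f x := by
  rw [← image_inv_eq_inv, integral_image_eq_integral_abs_deriv_smul hs
    (fun x hx => (hasDerivAt_inv (ne_of_mem_of_not_mem hx h0)).hasDerivWithinAt)
    inv_injective.injOn]
  simp only [abs_neg_inv_sq]
  rfl

theorem integrableOn_inv_iff {s : Set ℝ} (hs : MeasurableSet s) (h0 : (0 : ℝ) ∉ s) {f : ℝ → E} :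
    IntegrableOn f s⁻¹ ↔ IntegrableOn (invDensity f) s := by
  rw [← image_inv_eq_inv, integrableOn_image_iff_integrableOn_abs_deriv_smul hs
    (fun x hx => (hasDerivAt_inv (ne_of_mem_of_not_mem hx h0)).hasDerivWithinAt)
    inv_injective.injOn]
  simp only [abs_neg_inv_sq]
  rfl

theorem inv_Ioo_zero_one : (Ioo (0 : ℝ) 1)⁻¹ = Ioi 1 := by
  rw [inv_Ioo_0_left one_pos, inv_one]

theorem integrableOn_invDensity_Ioo_iff {f : ℝ → E} :
    IntegrableOn (invDensity f) (Ioo 0 1) ↔ IntegrableOn f (Ioi 1) := by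
  rw [← inv_Ioo_zero_one, integrableOn_inv_iff measurableSet_Ioo (by simp)]

theorem volume_restrict_Ioi_zero : (volume.restrict (Ioi 0) : Measure ℝ) =
    volume.restrict (Ioo 0 1) + volume.restrict (Ioi 1) := by
  rw [← Ioc_union_Ioi_eq_Ioi zero_le_one, Measure.restrict_union (Ioc_disjoint_Ioi le_rfl)
    measurableSet_Ioi, restrict_Ioo_eq_restrict_Ioc]

theorem setIntegral_Ioi_eq_add_setIntegral_invDensity {f : ℝ → E} (hf : IntegrableOn f (Ioi 0))
    {s : Set ℝ} (hs : MeasurableSet s) :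
    ∫ x in s, f x ∂volume.restrict (Ioi 0) = ∫ x in s, f x ∂volume.restrict (Ioo 0 1) +
      ∫ x in (·⁻¹) ⁻¹' s, invDensity f x ∂volume.restrict (Ioo 0 1) := by
  have hinv : s ∩ Ioi 1 = ((·⁻¹) ⁻¹' s ∩ Ioo 0 1)⁻¹ := by
    rw [inter_inv, inv_Ioo_zero_one, inv_preimage, inv_inv]
  have hsinv : MeasurableSet ((·⁻¹) ⁻¹' s) := measurable_inv hs
  rw [IntegrableOn, volume_restrict_Ioi_zero, integrable_add_measure] at hf
  rw [volume_restrict_Ioi_zero, Measure.restrict_add,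
    integral_add_measure hf.1.integrableOn hf.2.integrableOn,
    Measure.restrict_restrict (t := Ioi 1) hs, hinv,
    setIntegral_inv (hsinv.inter measurableSet_Ioo) (by simp), Measure.restrict_restrict hsinv]

theorem iUnion_Ioc_natCast_add (a : ℝ) : ⋃ k : ℕ, Ioc (k + a) (k + a + 1) = Ioi a := by
  have hlim : Tendsto (fun k : ℕ => k + a) atTop atTop :=
    tendsto_atTop_add_const_right _ _ tendsto_natCast_atTop_atTop
  simpa [add_right_comm] using iUnion_Ioc_map_succ_eq_Ioi (f := fun k : ℕ => k + a)
    (fun k => by simp) (not_bddAbove_of_tendsto_atTop hlim)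

theorem pairwise_disjoint_Ioc_natCast_add (a : ℝ) :
    Pairwise (Function.onFun Disjoint fun k : ℕ => Ioc (k + a) (k + a + 1)) := by
  have hmono : Monotone fun k : ℕ => k + a := fun j k hjk => by simpa using hjk
  simpa [add_right_comm] using hmono.pairwise_disjoint_on_Ioc_succ

theorem setIntegral_Ioc_add_one (f : ℝ → E) (c : ℝ) :
    ∫ x in Ioc c (c + 1), f x = ∫ x in Ioo 0 1, f (c + x) := by
  rw [← (measurePreserving_add_left volume c).setIntegral_preimage_emb
    (measurableEmbedding_addLeft c), preimage_const_add_Ioc, sub_self, add_sub_cancel_left,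
    integral_Ioc_eq_integral_Ioo]

theorem hasSum_setIntegral_Ioo_natCast_add {a : ℝ} {f : ℝ → E} (hf : IntegrableOn f (Ioi a)) :
    HasSum (fun k : ℕ => ∫ x in Ioo (0 : ℝ) 1, f (k + a + x)) (∫ x in Ioi a, f x) := by
  rw [← iUnion_Ioc_natCast_add] at hf ⊢
  simpa only [setIntegral_Ioc_add_one] using hasSum_integral_iUnion (fun k => measurableSet_Ioc)
    (pairwise_disjoint_Ioc_natCast_add a) hf

theorem setIntegral_Ioi_eq_setIntegral_tsum {a : ℝ} {f : ℝ → E} (hf : IntegrableOn f (Ioi a)) :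
    ∫ x in Ioi a, f x = ∫ x in Ioo (0 : ℝ) 1, ∑' k : ℕ, f (k + a + x) := by
  have hint (k : ℕ) : IntegrableOn (fun x => f (k + a + x)) (Ioo 0 1) := by
    have h : IntegrableOn f (Ioc (k + a) (k + a + 1)) :=
      hf.mono_set (iUnion_Ioc_natCast_add a ▸
        subset_iUnion (fun k : ℕ => Ioc (k + a) (k + a + 1)) k)
    rw [← (measurePreserving_add_left volume ((k : ℝ) + a)).integrableOn_comp_preimage
      (measurableEmbedding_addLeft _), preimage_const_add_Ioc, sub_self, add_sub_cancel_left] at h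
    exact h.mono_set Ioo_subset_Ioc_self
  exact (hasSum_setIntegral_Ioo_natCast_add hf).unique (hasSum_integral_of_summable_integral_norm
    hint (hasSum_setIntegral_Ioo_natCast_add (Integrable.norm hf)).summable)

end ChangeOfVariables

section WeightedAverages

variable {p q a : ℕ → ℝ} {c : ℝ}

theorem mul_sum_sub_le_sum_sub_mul (ha : Antitone a)
    (hpq : ∀ n, ∑ k ∈ Finset.range n, q k ≤ ∑ k ∈ Finset.range n, p k) (n : ℕ) :
    a n * ∑ k ∈ Finset.range n, (p k - q k) ≤ ∑ k ∈ Finset.range n, (p k - q k) * a k := by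
  induction n with
  | zero => simp
  | succ n ih =>
    have hnonneg : 0 ≤ ∑ k ∈ Finset.range (n + 1), (p k - q k) := by
      rw [Finset.sum_sub_distrib]
      exact sub_nonneg.2 (hpq _)
    calc a (n + 1) * ∑ k ∈ Finset.range (n + 1), (p k - q k)
        ≤ a n * ∑ k ∈ Finset.range (n + 1), (p k - q k) := by
          gcongr
          exact ha n.le_succ
      _ = a n * ∑ k ∈ Finset.range n, (p k - q k) + (p n - q n) * a n := by
          rw [Finset.sum_range_succ]
          ring
      _ ≤ ∑ k ∈ Finset.range (n + 1), (p k - q k) * a k := by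
          rw [Finset.sum_range_succ _ n]
          gcongr

theorem tsum_mul_le_tsum_mul_of_antitone {S : ℝ} (hp : HasSum p S) (hq : HasSum q S)
    (hpa : Summable fun k => p k * a k) (hqa : Summable fun k => q k * a k) (ha : Antitone a)
    (hc : ∀ n, c ≤ a n)
    (hpq : ∀ n, ∑ k ∈ Finset.range n, q k ≤ ∑ k ∈ Finset.range n, p k) :
    ∑' k, q k * a k ≤ ∑' k, p k * a k := by
  have hdiff : Tendsto (fun n => c * ∑ k ∈ Finset.range n, (p k - q k)) atTop (𝓝 0) := by
    simpa using (hp.sub hq).tendsto_sum_nat.const_mul c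
  have hsum : Tendsto (fun n => ∑ k ∈ Finset.range n, (p k - q k) * a k) atTop
      (𝓝 (∑' k, p k * a k - ∑' k, q k * a k)) := by
    simpa only [sub_mul] using (hpa.hasSum.sub hqa.hasSum).tendsto_sum_nat
  refine sub_nonneg.1 (le_of_tendsto_of_tendsto' hdiff hsum fun n => ?_)
  refine le_trans ?_ (mul_sum_sub_le_sum_sub_mul ha hpq n)
  refine mul_le_mul_of_nonneg_right (hc n) ?_
  rw [Finset.sum_sub_distrib]
  exact sub_nonneg.2 (hpq n)

theorem tsum_mul_le_of_forall_succ_le {M : ℝ} (hp : HasSum p 1) (hpos : ∀ k, 0 ≤ p k)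
    (hpa : Summable fun k => p k * a k) (ha : ∀ k, a (k + 1) ≤ M) :
    ∑' k, p k * a k ≤ p 0 * a 0 + (1 - p 0) * M := by
  have htail : HasSum (fun k => p (k + 1) * M) ((1 - p 0) * M) := by
    simpa using ((hasSum_nat_add_iff' 1).2 hp).mul_right M
  rw [hpa.tsum_eq_zero_add]
  gcongr
  exact (((summable_nat_add_iff 1).2 hpa).tsum_le_tsum
    (fun k => mul_le_mul_of_nonneg_left (ha k) (hpos _)) htail.summable).trans_eq htail.tsum_eq

theorem le_tsum_mul_of_forall_le_succ (hp : HasSum p 1) (hpos : ∀ k, 0 ≤ p k)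
    (hpa : Summable fun k => p k * a k) (ha : ∀ k, c ≤ a (k + 1)) :
    p 0 * a 0 + (1 - p 0) * c ≤ ∑' k, p k * a k := by
  have h := tsum_mul_le_of_forall_succ_le (a := -a) hp hpos (by simpa using hpa.neg)
    fun k => neg_le_neg (ha k)
  simp only [Pi.neg_apply, mul_neg, tsum_neg] at h
  linarith

end WeightedAverages

section GaussOperator

/-- The Gauss map `x ↦ {1/x}`. -/
noncomputable def gaussMap (x : ℝ) : ℝ := Int.fract x⁻¹

/-- The probability with which the Gauss transfer operator chooses the inverse branch
`x ↦ 1 / (k + 1 + x)` of the Gauss map. -/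
noncomputable def gaussWeight (k : ℕ) (x : ℝ) : ℝ := (1 + x) / ((k + 1 + x) * (k + 2 + x))

/-- The transfer operator of the Gauss map with respect to its invariant measure. -/
noncomputable def gaussOp (φ : ℝ → ℝ) (x : ℝ) : ℝ := ∑' k : ℕ, gaussWeight k x * φ (k + 1 + x)⁻¹

variable {φ : ℝ → ℝ} {x : ℝ}

theorem gaussWeight_nonneg (k : ℕ) (hx : 0 ≤ x) : 0 ≤ gaussWeight k x := by
  unfold gaussWeight; positivity

theorem sum_range_gaussWeight (n : ℕ) (hx : 0 ≤ x) :
    ∑ k ∈ Finset.range n, gaussWeight k x = n / (n + 1 + x) := by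
  induction n with
  | zero => simp
  | succ n ih =>
    rw [Finset.sum_range_succ, ih, gaussWeight]
    push_cast
    field_simp
    ring

theorem hasSum_gaussWeight (hx : 0 ≤ x) : HasSum (fun k => gaussWeight k x) 1 := by
  rw [hasSum_iff_tendsto_nat_of_nonneg fun k => gaussWeight_nonneg k hx]
  simpa only [sum_range_gaussWeight _ hx, add_assoc] using
    tendsto_natCast_div_add_atTop (1 + x)

theorem sum_range_gaussWeight_antitoneOn (n : ℕ) :
    AntitoneOn (fun x => ∑ k ∈ Finset.range n, gaussWeight k x) (Ici 0) := by
  intro x hx y hy hxy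
  have hx : 0 ≤ x := hx
  simp only [sum_range_gaussWeight n hx, sum_range_gaussWeight n hy]
  gcongr

theorem inv_natCast_add_one_add_mem_Icc (k : ℕ) (hx : 0 ≤ x) :
    ((k : ℝ) + 1 + x)⁻¹ ∈ Icc (0 : ℝ) 1 :=
  ⟨by positivity, inv_le_one_of_one_le₀ (by linarith [k.cast_nonneg (α := ℝ)])⟩

theorem summable_gaussWeight_mul {a : ℕ → ℝ} {l u : ℝ} (hx : 0 ≤ x) (ha : ∀ k, a k ∈ Icc l u) :
    Summable fun k => gaussWeight k x * a k := by
  refine .of_norm_bounded ((hasSum_gaussWeight hx).summable.mul_right (max |l| |u|)) fun k => ?_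
  rw [norm_mul, Real.norm_of_nonneg (gaussWeight_nonneg k hx)]
  exact mul_le_mul_of_nonneg_left (abs_le_max_abs_abs (ha k).1 (ha k).2) (gaussWeight_nonneg k hx)

section Monotone

variable (hφ : MonotoneOn φ (Icc 0 1))
include hφ

theorem apply_inv_natCast_add_one_add_mem_Icc (hx : 0 ≤ x) (k : ℕ) :
    φ (k + 1 + x)⁻¹ ∈ Icc (φ 0) (φ 1) :=
  hφ.mapsTo_Icc (inv_natCast_add_one_add_mem_Icc k hx)

/-- As `x` grows, the branches `1 / (k + 1 + x)` move to the left, and the weights shift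
towards the branches with large `k`, again to the left. -/
theorem gaussOp_antitoneOn : AntitoneOn (gaussOp φ) (Icc 0 1) := by
  intro x hx y hy hxy
  have hx0 := hx.1
  have hmem {z : ℝ} := apply_inv_natCast_add_one_add_mem_Icc hφ (x := z)
  have hanti : Antitone fun k : ℕ => φ (k + 1 + x)⁻¹ := fun j k hjk =>
    hφ (inv_natCast_add_one_add_mem_Icc k hx0) (inv_natCast_add_one_add_mem_Icc j hx0)
      (by gcongr)
  calc gaussOp φ y ≤ ∑' k : ℕ, gaussWeight k y * φ (k + 1 + x)⁻¹ := by
        refine (summable_gaussWeight_mul hy.1 (hmem hy.1)).tsum_le_tsum (fun k => ?_)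
          (summable_gaussWeight_mul hy.1 (hmem hx0))
        refine mul_le_mul_of_nonneg_left ?_ (gaussWeight_nonneg k hy.1)
        exact hφ (inv_natCast_add_one_add_mem_Icc k hy.1)
          (inv_natCast_add_one_add_mem_Icc k hx0) (by gcongr)
    _ ≤ gaussOp φ x :=
        tsum_mul_le_tsum_mul_of_antitone (hasSum_gaussWeight hx0) (hasSum_gaussWeight hy.1)
          (summable_gaussWeight_mul hx0 (hmem hx0)) (summable_gaussWeight_mul hy.1 (hmem hx0))
          hanti (fun k => (hmem hx0 k).1)
          fun n => sum_range_gaussWeight_antitoneOn n hx0 hy.1 hxy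

theorem gaussOp_zero_sub_gaussOp_one_le : gaussOp φ 0 - gaussOp φ 1 ≤ 2 / 3 * (φ 1 - φ 0) := by
  have hmem {z : ℝ} := apply_inv_natCast_add_one_add_mem_Icc hφ (x := z)
  have hzero : gaussOp φ 0 ≤ 1 / 2 * φ 1 + 1 / 2 * φ (1 / 2) := by
    refine (tsum_mul_le_of_forall_succ_le (M := φ (1 / 2)) (hasSum_gaussWeight le_rfl)
      (fun k => gaussWeight_nonneg k le_rfl) (summable_gaussWeight_mul le_rfl (hmem le_rfl))
      fun k => ?_).trans_eq (by norm_num [gaussWeight])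
    refine hφ (inv_natCast_add_one_add_mem_Icc _ le_rfl) (by norm_num) ?_
    rw [one_div]
    gcongr
    push_cast
    linarith [k.cast_nonneg (α := ℝ)]
  have hone : 1 / 3 * φ (1 / 2) + 2 / 3 * φ 0 ≤ gaussOp φ 1 :=
    (le_tsum_mul_of_forall_le_succ (hasSum_gaussWeight zero_le_one)
      (fun k => gaussWeight_nonneg k zero_le_one)
      (summable_gaussWeight_mul zero_le_one (hmem zero_le_one))
      fun k => (hmem zero_le_one (k + 1)).1).trans_eq' (by norm_num [gaussWeight])
  have hhalf : φ (1 / 2) ∈ Icc (φ 0) (φ 1) := hφ.mapsTo_Icc (by norm_num)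
  linarith [hhalf.1, hhalf.2]

end Monotone

end GaussOperator

section Correlation

variable {X E : Type*} [MeasurableSpace X] [NormedAddCommGroup E] [NormedSpace ℝ E]
  {μ : Measure X} {T : X → X} {f g : X → E} {s : Set X}

/-- The correlation between a density `f` and the event that the `n`-th iterate of `T` lies in
`s`. The dynamical system is mixing if all correlations tend to zero. -/
noncomputable def correlation (μ : Measure X) (T : X → X) (f : X → E) (s : Set X) (n : ℕ) : E :=
  ∫ x in T^[n] ⁻¹' s, f x ∂μ - μ.real s • ∫ x, f x ∂μ

theorem correlation_neg (f : X → E) (s : Set X) (n : ℕ) :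
    correlation μ T (-f) s n = -correlation μ T f s n := by
  simp only [correlation, Pi.neg_apply, integral_neg, smul_neg]
  abel

theorem correlation_add (hf : Integrable f μ) (hg : Integrable g μ) (s : Set X) (n : ℕ) :
    correlation μ T (f + g) s n = correlation μ T f s n + correlation μ T g s n := by
  simp only [correlation, Pi.add_apply, integral_add hf hg,
    integral_add hf.integrableOn hg.integrableOn, smul_add]
  abel

theorem norm_correlation_le [IsProbabilityMeasure μ] (hf : Integrable f μ) (n : ℕ) :
    ‖correlation μ T f s n‖ ≤ 2 * ∫ x, ‖f x‖ ∂μ := by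
  have hset : ‖∫ x in T^[n] ⁻¹' s, f x ∂μ‖ ≤ ∫ x, ‖f x‖ ∂μ :=
    (norm_integral_le_integral_norm _).trans
      (setIntegral_le_integral hf.norm (ae_of_all _ fun _ => norm_nonneg _))
  have hmean : ‖μ.real s • ∫ x, f x ∂μ‖ ≤ ∫ x, ‖f x‖ ∂μ := by
    rw [norm_smul, Real.norm_of_nonneg measureReal_nonneg]
    exact (mul_le_of_le_one_left (norm_nonneg _) measureReal_le_one).trans
      (norm_integral_le_integral_norm _)
  exact (norm_sub_le _ _).trans ((add_le_add hset hmean).trans_eq (two_mul _).symm)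

theorem tendsto_correlation_of_approx [IsProbabilityMeasure μ] (hf : Integrable f μ)
    (h : ∀ ε > 0, ∃ g, Integrable g μ ∧ ∫ x, ‖f x - g x‖ ∂μ ≤ ε ∧
      Tendsto (correlation μ T g s) atTop (𝓝 0)) :
    Tendsto (correlation μ T f s) atTop (𝓝 0) := by
  refine Metric.tendsto_nhds.2 fun ε hε => ?_
  obtain ⟨g, hg, hfg, hlim⟩ := h (ε / 4) (by positivity)
  filter_upwards [Metric.tendsto_nhds.1 hlim (ε / 2) (half_pos hε)] with n hn
  have hsub : correlation μ T f s n = correlation μ T (f - g) s n + correlation μ T g s n := by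
    rw [← correlation_add (hf.sub hg) hg, sub_add_cancel]
  rw [dist_zero_right] at hn ⊢
  calc ‖correlation μ T f s n‖ ≤ ‖correlation μ T (f - g) s n‖ + ‖correlation μ T g s n‖ :=
        hsub ▸ norm_add_le _ _
    _ ≤ 2 * ∫ x, ‖f x - g x‖ ∂μ + ‖correlation μ T g s n‖ := by
        gcongr
        exact norm_correlation_le (hf.sub hg) n
    _ < ε := by linarith

theorem tendsto_correlation_complex {f : X → ℂ} (hf : Integrable f μ)
    (hre : Tendsto (correlation μ T (fun x => (f x).re) s) atTop (𝓝 0))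
    (him : Tendsto (correlation μ T (fun x => (f x).im) s) atTop (𝓝 0)) :
    Tendsto (correlation μ T f s) atTop (𝓝 0) := by
  have hsplit (n : ℕ) : correlation μ T f s n = correlation μ T (fun x => (f x).re) s n +
      correlation μ T (fun x => (f x).im) s n * Complex.I := by
    have h1 := integral_re_add_im hf
    have h2 := integral_re_add_im (hf.integrableOn (s := T^[n] ⁻¹' s))
    simp only [RCLike.re_to_complex, RCLike.im_to_complex, Complex.coe_algebraMap,
      RCLike.I_to_complex] at h1 h2
    simp only [correlation, ← h1, ← h2, Complex.real_smul, smul_eq_mul, Complex.ofReal_sub,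
      Complex.ofReal_mul]
    ring
  simp only [funext hsplit]
  simpa using hre.ofReal.add (him.ofReal.mul_const Complex.I)

theorem setIntegral_eq_measureReal_smul_integral_of_mixing (hT : Measurable T) {k : ℕ}
    (hk : k ≠ 0)
    (hinv : ∀ s, MeasurableSet s → ∫ x in T^[k] ⁻¹' s, f x ∂μ = ∫ x in s, f x ∂μ)
    (hmix : Tendsto (correlation μ T f s) atTop (𝓝 0)) (hs : MeasurableSet s) :
    ∫ x in s, f x ∂μ = μ.real s • ∫ x, f x ∂μ := by
  have hiter (n : ℕ) : ∫ x in T^[k * n] ⁻¹' s, f x ∂μ = ∫ x in s, f x ∂μ := by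
    induction n with
    | zero => simp
    | succ n ih => rw [mul_add_one, Function.iterate_add, preimage_comp,
        hinv _ ((hT.iterate _) hs), ih]
  have hsub := hmix.comp (tendsto_id.const_mul_atTop' (Nat.pos_of_ne_zero hk))
  simp only [Function.comp_def, correlation, id, hiter] at hsub
  exact sub_eq_zero.1 (tendsto_const_nhds_iff.1 hsub)

theorem abs_correlation_zero_le [IsProbabilityMeasure μ] {f : X → ℝ} {a b : ℝ}
    (hf : Integrable f μ) (hab : ∀ᵐ x ∂μ, f x ∈ Icc a b) :
    |correlation μ T f s 0| ≤ b - a := by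
  have hmem (s : Set X) : ∫ x in s, f x ∂μ ∈ Icc (μ.real s * a) (μ.real s * b) := by
    have hab' := ae_restrict_of_ae (s := s) hab
    constructor
    · simpa using integral_mono_ae (integrable_const a) hf.integrableOn
        (hab'.mono fun x hx => hx.1)
    · simpa using integral_mono_ae hf.integrableOn (integrable_const b)
        (hab'.mono fun x hx => hx.2)
  have huniv := hmem univ
  simp only [setIntegral_univ, probReal_univ, one_mul] at huniv
  have hs : μ.real s ∈ Icc 0 1 := ⟨measureReal_nonneg, measureReal_le_one⟩
  rw [correlation, Function.iterate_zero, preimage_id, smul_eq_mul, abs_le]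
  constructor <;> nlinarith [(hmem s).1, (hmem s).2, huniv.1, huniv.2, hs.1, hs.2]

end Correlation

section PolynomialApproximation

variable {μ : Measure ℝ} [IsFiniteMeasure μ] {a b : ℝ}

theorem integrable_polynomial_eval (hμ : ∀ᵐ x ∂μ, x ∈ Icc a b) (p : Polynomial ℝ) :
    Integrable (fun x => p.eval x) μ := by
  rw [← Measure.restrict_eq_self_of_ae_mem hμ]
  exact p.continuous.continuousOn.integrableOn_Icc

theorem exists_polynomial_integral_norm_sub_le (hμ : ∀ᵐ x ∂μ, x ∈ Icc a b) {f : ℝ → ℝ}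
    (hf : Integrable f μ) {ε : ℝ} (hε : 0 < ε) :
    ∃ p : Polynomial ℝ, ∫ x, ‖f x - p.eval x‖ ∂μ ≤ ε := by
  obtain ⟨δ, hδ, hδε⟩ : ∃ δ > 0, μ.real univ * δ ≤ ε / 2 :=
    ⟨ε / 2 / (μ.real univ + 1), by positivity, by
      rw [← mul_div_assoc, div_le_iff₀ (by positivity)]
      nlinarith [measureReal_nonneg (μ := μ) (s := univ)]⟩
  obtain ⟨g, -, hfg, hgc, hg⟩ := hf.exists_hasCompactSupport_integral_sub_le (half_pos hε)
  obtain ⟨p, hp⟩ := exists_polynomial_near_of_continuousOn a b g hgc.continuousOn δ hδ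
  refine ⟨p, ?_⟩
  calc ∫ x, ‖f x - p.eval x‖ ∂μ ≤ ∫ x, (‖f x - g x‖ + δ) ∂μ := by
        refine integral_mono_ae (hf.sub (integrable_polynomial_eval hμ p)).norm
          ((hf.sub hg).norm.add (integrable_const δ)) ?_
        filter_upwards [hμ] with x hx
        refine (norm_sub_le_norm_sub_add_norm_sub _ (g x) _).trans ?_
        gcongr
        rw [norm_sub_rev]
        exact (hp x hx).le
    _ = ∫ x, ‖f x - g x‖ ∂μ + μ.real univ * δ := by
        rw [integral_add (f := fun x => ‖f x - g x‖) (hf.sub hg).norm (integrable_const δ),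
          integral_const, smul_eq_mul]
    _ ≤ ε := by linarith

end PolynomialApproximation

section GaussMeasure

/-- The density of the invariant probability measure of the Gauss map. -/
noncomputable def gaussDensity (x : ℝ) : ℝ := (log 2 * (1 + x))⁻¹

/-- The invariant probability measure of the Gauss map, concentrated on `(0, 1)`. -/
noncomputable def gaussMeasure : Measure ℝ :=
  (volume.restrict (Ioo 0 1)).withDensity fun x => ENNReal.ofReal (gaussDensity x)

variable {E : Type*} [NormedAddCommGroup E] [NormedSpace ℝ E] {f : ℝ → E} {φ : ℝ → ℝ} {s : Set ℝ}

@[fun_prop]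
theorem measurable_gaussDensity : Measurable gaussDensity := by
  unfold gaussDensity
  fun_prop

theorem gaussDensity_pos {x : ℝ} (hx : 0 ≤ x) : 0 < gaussDensity x := by
  have := log_pos one_lt_two
  unfold gaussDensity
  positivity

theorem gaussDensity_le {x : ℝ} (hx : 0 ≤ x) : gaussDensity x ≤ (log 2)⁻¹ := by
  have := log_pos one_lt_two
  exact inv_anti₀ this (le_mul_of_one_le_right this.le (by linarith))

theorem setIntegral_gaussMeasure (f : ℝ → E) (s : Set ℝ) :
    ∫ x in s, f x ∂gaussMeasure = ∫ x in s, gaussDensity x • f x ∂volume.restrict (Ioo 0 1) := by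
  rw [gaussMeasure, setIntegral_withDensity_eq_setIntegral_toReal_smul' s (by fun_prop)
    (ae_of_all _ fun _ => ENNReal.ofReal_lt_top)]
  refine integral_congr_ae (ae_restrict_of_ae ?_)
  filter_upwards [ae_restrict_mem measurableSet_Ioo] with x hx
  rw [ENNReal.toReal_ofReal (gaussDensity_pos hx.1.le).le]

theorem integral_gaussMeasure (f : ℝ → E) :
    ∫ x, f x ∂gaussMeasure = ∫ x in Ioo 0 1, gaussDensity x • f x := by
  simpa only [Measure.restrict_univ] using setIntegral_gaussMeasure f univ

theorem ae_gaussMeasure_mem_Ioo : ∀ᵐ x ∂gaussMeasure, x ∈ Ioo 0 1 :=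
  (withDensity_absolutelyContinuous _ _).ae_le (ae_restrict_mem measurableSet_Ioo)

theorem integrable_gaussMeasure_iff_smul :
    Integrable f gaussMeasure ↔ IntegrableOn (fun x => gaussDensity x • f x) (Ioo 0 1) := by
  rw [gaussMeasure, integrable_withDensity_iff_integrable_smul' (by fun_prop)
    (ae_of_all _ fun _ => ENNReal.ofReal_lt_top)]
  refine integrable_congr ?_
  filter_upwards [ae_restrict_mem measurableSet_Ioo] with x hx
  rw [ENNReal.toReal_ofReal (gaussDensity_pos hx.1.le).le]

theorem integrable_gaussMeasure_of_integrableOn (hf : IntegrableOn f (Ioo 0 1)) :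
    Integrable f gaussMeasure := by
  refine integrable_gaussMeasure_iff_smul.2 (Integrable.bdd_smul hf (log 2)⁻¹ (by fun_prop) ?_)
  filter_upwards [ae_restrict_mem measurableSet_Ioo] with x hx
  rw [Real.norm_of_nonneg (gaussDensity_pos hx.1.le).le]
  exact gaussDensity_le hx.1.le

instance isProbabilityMeasure_gaussMeasure : IsProbabilityMeasure gaussMeasure := by
  have hlog : ∫ x in (0 : ℝ)..1, (1 + x)⁻¹ = log 2 := by
    rw [intervalIntegral.integral_comp_add_left (fun x => x⁻¹), integral_inv_of_pos] <;> norm_num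
  have hmass := integral_gaussMeasure (fun _ => (1 : ℝ))
  simp only [gaussDensity, mul_inv, smul_eq_mul, mul_one, integral_const_mul] at hmass
  rw [← integral_Ioc_eq_integral_Ioo, ← intervalIntegral.integral_of_le zero_le_one, hlog,
    inv_mul_cancel₀ (log_pos one_lt_two).ne', integral_const, smul_eq_mul, mul_one] at hmass
  exact isProbabilityMeasure_iff_real.2 hmass

theorem measurable_gaussMap : Measurable gaussMap := measurable_fract.comp measurable_inv

theorem setIntegral_Ioo_eq_setIntegral_tsum_invDensity (hf : IntegrableOn f (Ioo 0 1)) :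
    ∫ x in Ioo 0 1, f x = ∫ x in Ioo (0 : ℝ) 1, ∑' k : ℕ, invDensity f (k + 1 + x) := by
  have hinv : Ioo (0 : ℝ) 1 = (Ioi 1)⁻¹ := by rw [← inv_Ioo_zero_one, inv_inv]
  have h0 : (0 : ℝ) ∉ Ioi 1 := by simp
  rw [hinv, integrableOn_inv_iff measurableSet_Ioi h0] at hf
  rw [← setIntegral_Ioi_eq_setIntegral_tsum hf, ← setIntegral_inv measurableSet_Ioi h0, ← hinv]

theorem gaussMap_inv_natCast_add_one_add (k : ℕ) {x : ℝ} (hx : x ∈ Ioo 0 1) :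
    gaussMap (k + 1 + x)⁻¹ = x := by
  rw [gaussMap, inv_inv, ← Nat.cast_add_one, Int.fract_natCast_add]
  exact Int.fract_eq_self.2 ⟨hx.1.le, hx.2⟩

theorem inv_sq_mul_gaussDensity_inv (k : ℕ) {x : ℝ} (hx : 0 ≤ x) :
    (((k : ℝ) + 1 + x) ^ 2)⁻¹ * gaussDensity (k + 1 + x)⁻¹ = gaussDensity x * gaussWeight k x := by
  have := log_pos one_lt_two
  simp only [gaussDensity, gaussWeight]
  field_simp
  ring

theorem setIntegral_preimage_gaussMap (hφ : Integrable φ gaussMeasure) (hs : MeasurableSet s) :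
    ∫ x in gaussMap ⁻¹' s, φ x ∂gaussMeasure = ∫ x in s, gaussOp φ x ∂gaussMeasure := by
  have hpre : MeasurableSet (gaussMap ⁻¹' s) := measurable_gaussMap hs
  have hint := (integrable_gaussMeasure_iff_smul.1 hφ).indicator hpre
  rw [setIntegral_gaussMeasure, setIntegral_gaussMeasure, ← integral_indicator hpre,
    ← integral_indicator hs, setIntegral_Ioo_eq_setIntegral_tsum_invDensity hint]
  refine setIntegral_congr_fun measurableSet_Ioo fun x hx => ?_
  by_cases hxs : x ∈ s
  · have hmem (k : ℕ) : ((k : ℝ) + 1 + x)⁻¹ ∈ gaussMap ⁻¹' s := by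
      rwa [mem_preimage, gaussMap_inv_natCast_add_one_add k hx]
    simp only [invDensity, indicator_of_mem (hmem _), indicator_of_mem hxs, smul_eq_mul, gaussOp,
      ← mul_assoc, inv_sq_mul_gaussDensity_inv _ hx.1.le, ← tsum_mul_left]
  · have hmem (k : ℕ) : ((k : ℝ) + 1 + x)⁻¹ ∉ gaussMap ⁻¹' s := by
      rwa [mem_preimage, gaussMap_inv_natCast_add_one_add k hx]
    simp only [invDensity, indicator_of_notMem (hmem _), indicator_of_notMem hxs, smul_zero,
      tsum_zero]

theorem correlation_gaussMap_succ (hφ : Integrable φ gaussMeasure) (hs : MeasurableSet s) (n : ℕ) :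
    correlation gaussMeasure gaussMap φ s (n + 1) =
      correlation gaussMeasure gaussMap (gaussOp φ) s n := by
  have huniv := setIntegral_preimage_gaussMap hφ MeasurableSet.univ
  rw [preimage_univ, setIntegral_univ, setIntegral_univ] at huniv
  rw [correlation, Function.iterate_succ, preimage_comp,
    setIntegral_preimage_gaussMap hφ ((measurable_gaussMap.iterate n) hs), huniv, correlation]

theorem abs_correlation_gaussMap_le (hφ : MonotoneOn φ (Icc 0 1)) (hs : MeasurableSet s) (n : ℕ) :
    |correlation gaussMeasure gaussMap φ s n| ≤ (2 / 3) ^ n * (φ 1 - φ 0) := by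
  have hint : Integrable φ gaussMeasure := integrable_gaussMeasure_of_integrableOn
    ((hφ.integrableOn_isCompact isCompact_Icc).mono_set Ioo_subset_Icc_self)
  induction n generalizing φ with
  | zero =>
    rw [pow_zero, one_mul]
    refine abs_correlation_zero_le hint (ae_gaussMeasure_mem_Ioo.mono fun x hx => ?_)
    exact hφ.mapsTo_Icc (Ioo_subset_Icc_self hx)
  | succ n ih =>
    have hmono : MonotoneOn (-gaussOp φ) (Icc 0 1) := (gaussOp_antitoneOn hφ).neg
    have hint_op : Integrable (-gaussOp φ) gaussMeasure := integrable_gaussMeasure_of_integrableOn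
      ((hmono.integrableOn_isCompact isCompact_Icc).mono_set Ioo_subset_Icc_self)
    calc |correlation gaussMeasure gaussMap φ s (n + 1)|
        = |correlation gaussMeasure gaussMap (-gaussOp φ) s n| := by
          rw [correlation_gaussMap_succ hint hs, correlation_neg, abs_neg]
      _ ≤ (2 / 3) ^ n * (gaussOp φ 0 - gaussOp φ 1) := by
          simpa only [Pi.neg_apply, neg_sub_neg] using ih hmono hint_op
      _ ≤ (2 / 3) ^ n * (2 / 3 * (φ 1 - φ 0)) := by
          gcongr
          exact gaussOp_zero_sub_gaussOp_one_le hφ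
      _ = (2 / 3) ^ (n + 1) * (φ 1 - φ 0) := by ring

theorem tendsto_correlation_gaussMap_of_monotoneOn (hφ : MonotoneOn φ (Icc 0 1))
    (hs : MeasurableSet s) : Tendsto (correlation gaussMeasure gaussMap φ s) atTop (𝓝 0) := by
  refine squeeze_zero_norm (abs_correlation_gaussMap_le hφ hs) ?_
  simpa using (tendsto_pow_atTop_nhds_zero_of_lt_one (r := (2 / 3 : ℝ)) (by norm_num)
    (by norm_num)).mul_const (φ 1 - φ 0)

theorem monotoneOn_eval_monomial (m : ℕ) {a : ℝ} (ha : 0 ≤ a) :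
    MonotoneOn (fun x => (Polynomial.monomial m a).eval x) (Icc 0 1) := by
  intro x hx y _ hxy
  have := hx.1
  simp only [Polynomial.eval_monomial]
  gcongr

theorem tendsto_correlation_gaussMap_polynomial (p : Polynomial ℝ) (hs : MeasurableSet s) :
    Tendsto (correlation gaussMeasure gaussMap (fun x => p.eval x) s) atTop (𝓝 0) := by
  have hint := integrable_polynomial_eval (ae_gaussMeasure_mem_Ioo.mono Ioo_subset_Icc_self)
  induction p using Polynomial.induction_on' with
  | add p q hp hq =>
    have hsplit (n : ℕ) : correlation gaussMeasure gaussMap (fun x => (p + q).eval x) s n =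
        correlation gaussMeasure gaussMap (fun x => p.eval x) s n +
          correlation gaussMeasure gaussMap (fun x => q.eval x) s n := by
      simp only [Polynomial.eval_add]
      exact correlation_add (hint p) (hint q) s n
    simpa only [funext hsplit, add_zero] using hp.add hq
  | monomial m a =>
    rcases le_total 0 a with ha | ha
    · exact tendsto_correlation_gaussMap_of_monotoneOn (monotoneOn_eval_monomial m ha) hs
    · have hneg (n : ℕ) :
          correlation gaussMeasure gaussMap (fun x => (Polynomial.monomial m a).eval x) s n =
            -correlation gaussMeasure gaussMap
              (fun x => (Polynomial.monomial m (-a)).eval x) s n := by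
        rw [← correlation_neg]
        congr 1
        ext x
        simp
      simpa only [funext hneg, neg_zero] using (tendsto_correlation_gaussMap_of_monotoneOn
        (monotoneOn_eval_monomial m (neg_nonneg.2 ha)) hs).neg

theorem tendsto_correlation_gaussMap_real (hφ : Integrable φ gaussMeasure)
    (hs : MeasurableSet s) : Tendsto (correlation gaussMeasure gaussMap φ s) atTop (𝓝 0) := by
  have hmem := ae_gaussMeasure_mem_Ioo.mono Ioo_subset_Icc_self
  refine tendsto_correlation_of_approx hφ fun ε hε => ?_
  obtain ⟨p, hp⟩ := exists_polynomial_integral_norm_sub_le hmem hφ hε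
  exact ⟨_, integrable_polynomial_eval hmem p, hp, tendsto_correlation_gaussMap_polynomial p hs⟩

theorem tendsto_correlation_gaussMap {f : ℝ → ℂ} (hf : Integrable f gaussMeasure)
    (hs : MeasurableSet s) : Tendsto (correlation gaussMeasure gaussMap f s) atTop (𝓝 0) :=
  tendsto_correlation_complex hf (tendsto_correlation_gaussMap_real hf.re hs)
    (tendsto_correlation_gaussMap_real hf.im hs)

theorem ae_eq_gaussDensity_smul_integral {k : ℕ} (hk : k ≠ 0) {f : ℝ → ℂ}
    (hf : IntegrableOn f (Ioo 0 1))
    (hinv : ∀ s, MeasurableSet s → ∫ x in gaussMap^[k] ⁻¹' s, f x ∂volume.restrict (Ioo 0 1) =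
      ∫ x in s, f x ∂volume.restrict (Ioo 0 1)) :
    ∀ᵐ x ∂volume.restrict (Ioo 0 1), f x = gaussDensity x • ∫ y in Ioo 0 1, f y := by
  have hcancel : ∀ᵐ x ∂volume.restrict (Ioo 0 1),
      gaussDensity x • (gaussDensity x)⁻¹ • f x = f x := by
    filter_upwards [ae_restrict_mem measurableSet_Ioo] with x hx
    exact smul_inv_smul₀ (gaussDensity_pos hx.1.le).ne' _
  have hint : Integrable (fun x => (gaussDensity x)⁻¹ • f x) gaussMeasure :=
    integrable_gaussMeasure_iff_smul.2 (hf.congr (hcancel.mono fun x hx => hx.symm))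
  have hset (s : Set ℝ) : ∫ x in s, (gaussDensity x)⁻¹ • f x ∂gaussMeasure =
      ∫ x in s, f x ∂volume.restrict (Ioo 0 1) :=
    (setIntegral_gaussMeasure _ s).trans (integral_congr_ae (ae_restrict_of_ae hcancel))
  have hconst := integrable_gaussMeasure_iff_smul.1
    (integrable_const (μ := gaussMeasure) (∫ y in Ioo 0 1, f y))
  refine Integrable.ae_eq_of_forall_setIntegral_eq _ _ hf hconst fun s hs _ => ?_
  have hmix := setIntegral_eq_measureReal_smul_integral_of_mixing measurable_gaussMap hk
    (fun s hs => by simpa only [hset] using hinv s hs) (tendsto_correlation_gaussMap hint hs) hs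
  rw [hset, ← setIntegral_univ (μ := gaussMeasure), hset, setIntegral_univ] at hmix
  rw [hmix, ← setIntegral_gaussMeasure, setIntegral_const]

end GaussMeasure

section CrossKernel

theorem setIntegral_preimage_fract_Ioo {E : Type*} [NormedAddCommGroup E] [NormedSpace ℝ E]
    (f : ℝ → E) {s : Set ℝ} (hs : MeasurableSet s) :
    ∫ x in Int.fract ⁻¹' s, f x ∂volume.restrict (Ioo 0 1) =
      ∫ x in s, f x ∂volume.restrict (Ioo 0 1) := by
  have hset : Int.fract ⁻¹' s ∩ Ioo 0 1 = s ∩ Ioo 0 1 := by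
    ext x
    refine and_congr_left fun hx => ?_
    rw [mem_preimage, Int.fract_eq_self.2 ⟨hx.1.le, hx.2⟩]
  rw [Measure.restrict_restrict (measurable_fract hs), Measure.restrict_restrict hs, hset]

theorem ae_eq_Ioi_of_ae_eq_of_invDensity_ae_eq {E : Type*} [NormedAddCommGroup E]
    [NormedSpace ℝ E] {f g : ℝ → E} (h : f =ᵐ[volume.restrict (Ioo 0 1)] g)
    (hinv : invDensity f =ᵐ[volume.restrict (Ioo 0 1)] invDensity g) :
    f =ᵐ[volume.restrict (Ioi 0)] g := by
  rw [volume_restrict_Ioi_zero]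
  refine ae_add_measure_iff.2 ⟨h, ?_⟩
  rw [← inv_Ioo_zero_one, ← image_inv_eq_inv,
    ae_restrict_iff' (by simpa using measurableSet_Ioo.inv)]
  refine ae_imp_of_mem_image_of_differentiableOn
    (fun x hx => (differentiableAt_inv hx.1.ne').differentiableWithinAt) ?_
  filter_upwards [(ae_restrict_iff' measurableSet_Ioo).1 hinv] with x hx hx01
  have hx0 := hx01.1
  exact smul_right_injective E (r := (x ^ 2)⁻¹) (by positivity) (hx hx01)

theorem ae_eq_gaussDensity_smul_integral_of_add_eq_zero {f g : ℝ → ℂ}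
    (hf : IntegrableOn f (Ioo 0 1))
    (hfg : ∀ s, MeasurableSet s → ∫ x in s, f x ∂volume.restrict (Ioo 0 1) +
      ∫ x in gaussMap ⁻¹' s, g x ∂volume.restrict (Ioo 0 1) = 0)
    (hgf : ∀ s, MeasurableSet s → ∫ x in gaussMap ⁻¹' s, f x ∂volume.restrict (Ioo 0 1) +
      ∫ x in s, g x ∂volume.restrict (Ioo 0 1) = 0) :
    ∀ᵐ x ∂volume.restrict (Ioo 0 1), f x = gaussDensity x • ∫ y in Ioo 0 1, f y := by
  refine ae_eq_gaussDensity_smul_integral two_ne_zero hf fun s hs => ?_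
  exact (eq_neg_of_add_eq_zero_left (hgf _ (measurable_gaussMap hs))).trans
    (eq_neg_of_add_eq_zero_left (hfg s hs)).symm

/-- The density spanning the annihilator of the critical lattice-cross. It equals `(1 + x)⁻¹` on
`(0, 1)` and `-(x * (1 + x))⁻¹` on `[1, ∞)`; written as the difference of `(1 + x)⁻¹` and its
translate by `1`, its Fourier transform becomes a multiple of `1 - exp (I * ω)`. -/
noncomputable def crossKernel (x : ℝ) : ℝ := (1 + x)⁻¹ - (Ici 1).indicator (·⁻¹) x

theorem crossKernel_of_lt_one {x : ℝ} (hx : x < 1) : crossKernel x = (1 + x)⁻¹ := by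
  rw [crossKernel, indicator_of_notMem (notMem_Ici.2 hx), sub_zero]

theorem crossKernel_of_one_le {x : ℝ} (hx : 1 ≤ x) : crossKernel x = (1 + x)⁻¹ - x⁻¹ := by
  rw [crossKernel, indicator_of_mem (mem_Ici.2 hx)]

theorem inv_sq_mul_crossKernel_inv {x : ℝ} (hx : x ∈ Ioo 0 1) :
    (x ^ 2)⁻¹ * crossKernel x⁻¹ = -(1 + x)⁻¹ := by
  have hx0 := hx.1
  rw [crossKernel_of_one_le ((one_lt_inv₀ hx0).2 hx.2).le]
  field_simp
  ring

variable {f : ℝ → ℂ}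

theorem exists_ae_eq_mul_crossKernel (hf : IntegrableOn f (Ioi 0))
    (h1 : ∀ m : ℤ, ∫ x in Ioi (0 : ℝ), Complex.exp (2 * π * Complex.I * m * x) * f x = 0)
    (h2 : ∀ m : ℤ, ∫ x in Ioi (0 : ℝ),
      Complex.exp (2 * π * Complex.I * m * (x⁻¹ : ℝ)) * f x = 0) :
    ∃ c : ℂ, ∀ᵐ x ∂volume.restrict (Ioi 0), f x = c * crossKernel x := by
  have hfg (s : Set ℝ) (hs : MeasurableSet s) : ∫ x in s, f x ∂volume.restrict (Ioo 0 1) +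
      ∫ x in gaussMap ⁻¹' s, invDensity f x ∂volume.restrict (Ioo 0 1) = 0 := by
    rw [← setIntegral_preimage_fract_eq_zero measurable_id hf h1 hs,
      ← setIntegral_preimage_fract_Ioo f hs]
    exact (setIntegral_Ioi_eq_add_setIntegral_invDensity hf (measurable_fract hs)).symm
  have hgf (s : Set ℝ) (hs : MeasurableSet s) :
      ∫ x in gaussMap ⁻¹' s, f x ∂volume.restrict (Ioo 0 1) +
        ∫ x in s, invDensity f x ∂volume.restrict (Ioo 0 1) = 0 := by
    have hset : (·⁻¹) ⁻¹' (gaussMap ⁻¹' s) = Int.fract ⁻¹' s := by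
      ext x
      simp only [mem_preimage, gaussMap, inv_inv]
    rw [← setIntegral_preimage_fract_eq_zero measurable_inv hf h2 hs,
      ← setIntegral_preimage_fract_Ioo _ hs, ← hset]
    exact (setIntegral_Ioi_eq_add_setIntegral_invDensity hf (measurable_gaussMap hs)).symm
  have hf0 : IntegrableOn f (Ioo 0 1) := hf.mono_set Ioo_subset_Ioi_self
  have hg0 : IntegrableOn (invDensity f) (Ioo 0 1) :=
    integrableOn_invDensity_Ioo_iff.2 (hf.mono_set (Ioi_subset_Ioi zero_le_one))
  have hmean : ∫ x in Ioo 0 1, invDensity f x = -∫ x in Ioo 0 1, f x := by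
    simpa only [preimage_univ, setIntegral_univ] using
      eq_neg_of_add_eq_zero_right (hfg univ MeasurableSet.univ)
  refine ⟨(log 2)⁻¹ • ∫ x in Ioo 0 1, f x, ae_eq_Ioi_of_ae_eq_of_invDensity_ae_eq ?_ ?_⟩
  · filter_upwards [ae_eq_gaussDensity_smul_integral_of_add_eq_zero hf0 hfg hgf,
      ae_restrict_mem measurableSet_Ioo] with x hx hx01
    rw [hx, crossKernel_of_lt_one hx01.2, gaussDensity, mul_inv, mul_comm _ (Complex.ofReal _),
      ← Complex.real_smul, smul_smul, mul_comm]
  · filter_upwards [ae_eq_gaussDensity_smul_integral_of_add_eq_zero hg0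
      (fun s hs => (add_comm _ _).trans (hgf s hs)) (fun s hs => (add_comm _ _).trans (hfg s hs)),
      ae_restrict_mem measurableSet_Ioo] with x hx hx01
    rw [hx, hmean, invDensity, mul_comm _ (Complex.ofReal _), ← Complex.real_smul, smul_smul,
      inv_sq_mul_crossKernel_inv hx01, gaussDensity, mul_inv, smul_smul, smul_neg, ← neg_smul,
      neg_mul, mul_comm]

end CrossKernel

section FourierTransform

/-- The integrand of the Laplace representation
`crossKernel x = ∫ u in Ioi 0, crossLaplace x u`. -/
noncomputable def crossLaplace (x u : ℝ) : ℝ :=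
  rexp (-(1 + x) * u) - (Ici 1).indicator (fun y => rexp (-y * u)) x

variable {x u ω : ℝ}

theorem crossLaplace_of_lt_one (hx : x < 1) (u : ℝ) : crossLaplace x u = rexp (-(1 + x) * u) := by
  rw [crossLaplace, indicator_of_notMem (notMem_Ici.2 hx), sub_zero]

theorem crossLaplace_of_one_le (hx : 1 ≤ x) (u : ℝ) :
    crossLaplace x u = rexp (-(1 + x) * u) - rexp (-x * u) := by
  rw [crossLaplace, indicator_of_mem (mem_Ici.2 hx)]

theorem measurable_uncurry_crossLaplace : Measurable (Function.uncurry crossLaplace) := by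
  have hind : Measurable ((Prod.fst ⁻¹' Ici (1 : ℝ)).indicator
      fun z : ℝ × ℝ => rexp (-z.1 * z.2)) :=
    Measurable.indicator (by fun_prop) (measurable_fst measurableSet_Ici)
  exact Measurable.sub (by fun_prop) hind

theorem integral_exp_neg_mul_Ioi {a : ℝ} (ha : 0 < a) : ∫ u in Ioi 0, rexp (-a * u) = a⁻¹ := by
  rw [integral_exp_mul_Ioi (neg_lt_zero.2 ha) 0, mul_zero, exp_zero, neg_div_neg_eq, one_div]

theorem integrableOn_crossLaplace (hx : 0 < x) : IntegrableOn (crossLaplace x) (Ioi 0) := by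
  have h1 : IntegrableOn (fun u => rexp (-(1 + x) * u)) (Ioi 0) :=
    integrableOn_exp_mul_Ioi (by linarith) 0
  rcases lt_or_ge x 1 with hx1 | hx1
  · exact h1.congr (ae_of_all _ fun u => (crossLaplace_of_lt_one hx1 u).symm)
  · exact (h1.sub (integrableOn_exp_mul_Ioi (neg_lt_zero.2 hx) 0)).congr
      (ae_of_all _ fun u => (crossLaplace_of_one_le hx1 u).symm)

theorem integral_crossLaplace (hx : 0 < x) : ∫ u in Ioi 0, crossLaplace x u = crossKernel x := by
  have h1 : 0 < 1 + x := by positivity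
  rcases lt_or_ge x 1 with hx1 | hx1
  · simp only [crossLaplace_of_lt_one hx1, crossKernel_of_lt_one hx1, integral_exp_neg_mul_Ioi h1]
  · simp only [crossLaplace_of_one_le hx1, crossKernel_of_one_le hx1]
    rw [integral_sub (integrableOn_exp_mul_Ioi (neg_lt_zero.2 h1) 0)
      (integrableOn_exp_mul_Ioi (neg_lt_zero.2 hx) 0), integral_exp_neg_mul_Ioi h1,
      integral_exp_neg_mul_Ioi hx]

theorem integral_norm_crossLaplace (hx : 0 < x) :
    ∫ u in Ioi 0, ‖crossLaplace x u‖ = ‖crossKernel x‖ := by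
  rw [← integral_crossLaplace hx]
  rcases lt_or_ge x 1 with hx1 | hx1
  · have hpos (u : ℝ) : 0 ≤ crossLaplace x u := by
      rw [crossLaplace_of_lt_one hx1]
      positivity
    simp only [Real.norm_of_nonneg (hpos _), Real.norm_of_nonneg (integral_nonneg hpos)]
  · have hneg (u : ℝ) (hu : u ∈ Ioi 0) : crossLaplace x u ≤ 0 := by
      rw [crossLaplace_of_one_le hx1, sub_nonpos, exp_le_exp]
      linarith [mem_Ioi.1 hu]
    rw [Real.norm_of_nonpos (setIntegral_nonpos measurableSet_Ioi hneg), ← integral_neg]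
    exact setIntegral_congr_fun measurableSet_Ioi fun u hu => Real.norm_of_nonpos (hneg u hu)

theorem integrableOn_crossKernel : IntegrableOn crossKernel (Ioi 0) := by
  have hbase : IntegrableOn (fun x : ℝ => (1 + x)⁻¹) (Ioo 0 1) := by
    refine (ContinuousOn.integrableOn_Icc ?_).mono_set Ioo_subset_Icc_self
    exact ContinuousOn.inv₀ (by fun_prop) fun x hx => by linarith [hx.1]
  rw [IntegrableOn, volume_restrict_Ioi_zero, integrable_add_measure]
  refine ⟨?_, integrableOn_invDensity_Ioo_iff.1 ?_⟩
  · exact (integrableOn_congr_fun (fun x hx => crossKernel_of_lt_one hx.2) measurableSet_Ioo).2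
      hbase
  · exact (integrableOn_congr_fun (fun x hx => inv_sq_mul_crossKernel_inv hx)
      measurableSet_Ioo).2 hbase.neg

theorem norm_exp_I_mul_ofReal_mul_ofReal (ω x : ℝ) : ‖Complex.exp (Complex.I * ω * x)‖ = 1 := by
  rw [mul_assoc, ← Complex.ofReal_mul, Complex.norm_exp_I_mul_ofReal]

theorem integral_exp_mul_crossKernel_eq_integral_integral (ω : ℝ) :
    ∫ x in Ioi (0 : ℝ), Complex.exp (Complex.I * ω * x) * crossKernel x =
      ∫ u in Ioi 0, ∫ x in Ioi (0 : ℝ), Complex.exp (Complex.I * ω * x) * crossLaplace x u := by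
  have hprod : Integrable (Function.uncurry fun x u : ℝ =>
      Complex.exp (Complex.I * ω * x) * (crossLaplace x u : ℂ))
      ((volume.restrict (Ioi (0 : ℝ))).prod (volume.restrict (Ioi (0 : ℝ)))) := by
    have hmeas : Measurable (Function.uncurry fun x u : ℝ =>
        Complex.exp (Complex.I * ω * x) * (crossLaplace x u : ℂ)) :=
      Measurable.mul (by fun_prop) measurable_uncurry_crossLaplace.complex_ofReal
    refine (integrable_prod_iff hmeas.aestronglyMeasurable).2
      ⟨?_, integrableOn_crossKernel.norm.congr ?_⟩
    · filter_upwards [ae_restrict_mem measurableSet_Ioi] with x hx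
      have h : Integrable (fun u => (crossLaplace x u : ℂ)) (volume.restrict (Ioi 0)) :=
        (integrableOn_crossLaplace hx).ofReal
      exact h.const_mul (Complex.exp (Complex.I * ω * x))
    · filter_upwards [ae_restrict_mem measurableSet_Ioi] with x hx
      simp only [Function.uncurry_apply_pair, norm_mul, norm_exp_I_mul_ofReal_mul_ofReal, one_mul,
        Complex.norm_real, integral_norm_crossLaplace hx]
  rw [← integral_integral_swap hprod]
  refine setIntegral_congr_fun measurableSet_Ioi fun x hx => ?_
  simp only [integral_const_mul, integral_complex_ofReal, integral_crossLaplace hx]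

theorem I_mul_sub_ofReal_re_neg (ω : ℝ) (hu : 0 < u) : (Complex.I * ω - u).re < 0 := by
  simpa using hu

theorem exp_I_mul_mul_crossLaplace (ω x u : ℝ) :
    Complex.exp (Complex.I * ω * x) * crossLaplace x u =
      Complex.exp (-u) * Complex.exp ((Complex.I * ω - u) * x) -
        (Ici 1).indicator (fun y : ℝ => Complex.exp ((Complex.I * ω - u) * y)) x := by
  by_cases hx : x ∈ Ici 1 <;>
  · simp only [crossLaplace, hx, indicator_of_mem, indicator_of_notMem, not_false_eq_true]
    push_cast
    simp only [mul_sub, mul_zero, ← Complex.exp_add]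
    ring_nf

theorem integral_exp_mul_crossLaplace (ω : ℝ) (hu : 0 < u) :
    ∫ x in Ioi (0 : ℝ), Complex.exp (Complex.I * ω * x) * crossLaplace x u =
      (Complex.exp (Complex.I * ω) - 1) * (rexp (-u) * (Complex.I * ω - u)⁻¹) := by
  have hz := I_mul_sub_ofReal_re_neg ω hu
  have hint := integrableOn_exp_mul_complex_Ioi hz 0
  have hset : Ioi (0 : ℝ) ∩ Ici 1 = Ici 1 :=
    inter_eq_right.2 (Ici_subset_Ioi.2 zero_lt_one)
  simp only [exp_I_mul_mul_crossLaplace]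
  rw [integral_sub (hint.const_mul _) (hint.integrable.indicator measurableSet_Ici),
    integral_const_mul, setIntegral_indicator measurableSet_Ici, hset, integral_Ici_eq_integral_Ioi,
    integral_exp_mul_complex_Ioi hz, integral_exp_mul_complex_Ioi hz]
  push_cast
  rw [mul_zero, Complex.exp_zero, mul_one, sub_eq_add_neg (Complex.I * ω), Complex.exp_add]
  ring

theorem integral_exp_mul_crossKernel (ω : ℝ) :
    ∫ x in Ioi (0 : ℝ), Complex.exp (Complex.I * ω * x) * crossKernel x =
      (Complex.exp (Complex.I * ω) - 1) * ∫ u in Ioi 0, rexp (-u) * (Complex.I * ω - u)⁻¹ := by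
  rw [integral_exp_mul_crossKernel_eq_integral_integral, ← integral_const_mul]
  exact setIntegral_congr_fun measurableSet_Ioi fun u hu => integral_exp_mul_crossLaplace ω hu

theorem integrableOn_exp_neg_mul_inv (hω : ω ≠ 0) :
    IntegrableOn (fun u : ℝ => (rexp (-u) : ℂ) * (Complex.I * ω - u)⁻¹) (Ioi 0) := by
  have hexp : IntegrableOn (fun u => rexp (-u)) (Ioi 0) := integrableOn_exp_neg_Ioi 0
  refine hexp.ofReal.mul_bdd (c := |ω|⁻¹) (by fun_prop) (ae_of_all _ fun u => ?_)
  rw [norm_inv]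
  refine inv_anti₀ (abs_pos.2 hω) ?_
  simpa using Complex.abs_im_le_norm (Complex.I * ω - u)

theorem im_exp_neg_mul_inv (ω u : ℝ) : ((rexp (-u) : ℂ) * (Complex.I * ω - u)⁻¹).im =
    -ω * (rexp (-u) * (u ^ 2 + ω ^ 2)⁻¹) := by
  rw [Complex.im_ofReal_mul, Complex.inv_im, Complex.normSq_apply]
  simp only [Complex.sub_im, Complex.mul_im, Complex.I_re, Complex.ofReal_im, mul_zero,
    Complex.I_im, Complex.ofReal_re, one_mul, zero_add, sub_zero, Complex.sub_re, Complex.mul_re,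
    zero_mul, sub_self, zero_sub, mul_neg, neg_mul, neg_neg]
  ring

/-- For `ω > 0`, `exp (I * ω)` times this integral is the point `Ci ω + I * si ω` of the Nielsen
spiral. The integral does not vanish because the integrand stays in an open half-plane. -/
theorem integral_exp_neg_mul_inv_ne_zero (hω : ω ≠ 0) :
    ∫ u in Ioi 0, (rexp (-u) : ℂ) * (Complex.I * ω - u)⁻¹ ≠ 0 := by
  have hint := integrableOn_exp_neg_mul_inv hω
  have hpos (u : ℝ) : 0 < rexp (-u) * (u ^ 2 + ω ^ 2)⁻¹ := by positivity
  have hint_im : IntegrableOn (fun u => rexp (-u) * (u ^ 2 + ω ^ 2)⁻¹) (Ioi 0) := by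
    refine (integrable_const_mul_iff (IsUnit.mk0 (-ω) (neg_ne_zero.2 hω)) _).1 ?_
    simpa only [← im_exp_neg_mul_inv] using! hint.im
  have hint_pos : 0 < ∫ u in Ioi 0, rexp (-u) * (u ^ 2 + ω ^ 2)⁻¹ := by
    rw [setIntegral_pos_iff_support_of_nonneg_ae (ae_of_all _ fun u => (hpos u).le) hint_im,
      Function.support_eq_univ fun u => (hpos u).ne', univ_inter, volume_Ioi]
    exact ENNReal.zero_lt_top
  have him : (∫ u in Ioi 0, (rexp (-u) : ℂ) * (Complex.I * ω - u)⁻¹).im =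
      -ω * ∫ u in Ioi 0, rexp (-u) * (u ^ 2 + ω ^ 2)⁻¹ := by
    rw [← integral_const_mul]
    simpa only [← im_exp_neg_mul_inv] using! (integral_im hint).symm
  intro h
  rw [h, Complex.zero_im] at him
  exact mul_ne_zero (neg_ne_zero.2 hω) hint_pos.ne' him.symm

theorem integral_exp_mul_crossKernel_ne_zero (hω : ∀ n : ℤ, ω ≠ n * (2 * π)) :
    ∫ x in Ioi (0 : ℝ), Complex.exp (Complex.I * ω * x) * crossKernel x ≠ 0 := by
  rw [integral_exp_mul_crossKernel]
  refine mul_ne_zero (sub_ne_zero.2 fun h => ?_)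
    (integral_exp_neg_mul_inv_ne_zero (by simpa using hω 0))
  obtain ⟨n, hn⟩ := Complex.exp_eq_one_iff.1 h
  exact hω n (by simpa using congrArg Complex.im hn)

end FourierTransform

section Rescaling

variable {b : ℝ}

theorem ae_restrict_Ioi_zero_of_comp_mul_left (hb : 0 < b) {p : ℝ → Prop}
    (h : ∀ᵐ x ∂volume.restrict (Ioi 0), p (b * x)) : ∀ᵐ t ∂volume.restrict (Ioi 0), p t := by
  have himage : (b * ·) '' Ioi 0 = Ioi 0 := by rw [image_const_mul_Ioi_zero hb]
  rw [ae_restrict_iff' measurableSet_Ioi] at h ⊢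
  simpa only [himage] using
    ae_imp_of_mem_image_of_differentiableOn (φ := (b * ·)) (by fun_prop) h

theorem integral_comp_mul_left_Ioi_zero_eq_zero {E : Type*} [NormedAddCommGroup E]
    [NormedSpace ℝ E] (hb : 0 < b) {g : ℝ → E} (h : ∫ t in Ioi 0, g t = 0) :
    ∫ x in Ioi 0, g (b * x) = 0 := by
  rw [integral_comp_mul_left_Ioi g 0 hb, mul_zero, h, smul_zero]

end Rescaling

section Uniqueness

variable {f : ℝ → ℂ} {ω : ℝ}

theorem ae_eq_zero_of_cross_of_frequency (hf : IntegrableOn f (Ioi 0))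
    (h1 : ∀ m : ℤ, ∫ x in Ioi (0 : ℝ), Complex.exp (2 * π * Complex.I * m * x) * f x = 0)
    (h2 : ∀ m : ℤ, ∫ x in Ioi (0 : ℝ),
      Complex.exp (2 * π * Complex.I * m * (x⁻¹ : ℝ)) * f x = 0)
    (hω : ∀ n : ℤ, ω ≠ n * (2 * π))
    (h3 : ∫ x in Ioi (0 : ℝ), Complex.exp (Complex.I * ω * x) * f x = 0) :
    ∀ᵐ x ∂volume.restrict (Ioi 0), f x = 0 := by
  obtain ⟨c, hc⟩ := exists_ae_eq_mul_crossKernel hf h1 h2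
  have hker : c * ∫ x in Ioi (0 : ℝ), Complex.exp (Complex.I * ω * x) * crossKernel x = 0 := by
    rw [← h3, ← integral_const_mul]
    refine integral_congr_ae (hc.mono fun x hx => ?_)
    simp only [hx, mul_left_comm]
  have hc0 := (mul_eq_zero.1 hker).resolve_right (integral_exp_mul_crossKernel_ne_zero hω)
  simpa only [hc0, zero_mul] using hc

end Uniqueness

/-- Critical regime `αβ = 4` for one branch of the hyperbola: adding one extra
frequency point `s ∉ αℤ` on the first axis restores uniqueness. -/
theorem stmt_3 (α β : ℝ) (hα : 0 < α) (hβ : 0 < β) (hcrit : α * β = 4)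
    (s : ℝ) (hs : ∀ m : ℤ, s ≠ α * m)
    (f : ℝ → ℂ) (hf : IntegrableOn f (Set.Ioi 0))
    (h1 : ∀ m : ℤ, ∫ t in Set.Ioi (0:ℝ), Complex.exp (Complex.I * π * α * m * t) * f t = 0)
    (h2 : ∀ n : ℤ, ∫ t in Set.Ioi (0:ℝ), Complex.exp (-(Complex.I * π * β * n) / t) * f t = 0)
    (h3 : ∫ t in Set.Ioi (0:ℝ), Complex.exp (Complex.I * π * s * t) * f t = 0) :
    ∀ᵐ t ∂(volume.restrict (Set.Ioi (0:ℝ))), f t = 0 := by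
  have hb : 0 < 2 / α := by positivity
  have hαC : (α : ℂ) ≠ 0 := by exact_mod_cast hα.ne'
  have hβC : (β : ℂ) = 4 / α := by exact_mod_cast eq_div_of_mul_eq hα.ne' (mul_comm β α ▸ hcrit)
  refine ae_restrict_Ioi_zero_of_comp_mul_left hb (ae_eq_zero_of_cross_of_frequency
    (ω := 2 * π * (s / α)) ?_ (fun m => ?_) (fun m => ?_) (fun n hn => hs n ?_) ?_)
  · rwa [integrableOn_Ioi_comp_mul_left_iff f 0 hb, mul_zero]
  · convert integral_comp_mul_left_Ioi_zero_eq_zero hb (h1 m) using 5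
    push_cast
    field_simp
  · convert integral_comp_mul_left_Ioi_zero_eq_zero hb (h2 (-m)) using 5
    rw [hβC]
    push_cast
    field_simp
    ring
  · field_simp at hn
    linarith
  · convert integral_comp_mul_left_Ioi_zero_eq_zero hb h3 using 5
    push_cast
    field_simp
end

section
/- Let (a, b) ∈ ℝ² be a pair with a < 0 or b > 0. Then there exists f ∈ L¹(ℝ, ℂ) such that ∫_ℝ e^{iyt} f(t) dt = 0 for every real y ≥ 0, while ∫_ℝ e^{i(at + b/t)} f(t) dt ≠ 0. -/
open MeasureTheory Real

/-!
Write `e_{a,b}(z) = e^{i(az + b/z)}`, so that `e_{a,b} e_{c,d} = e_{a+c,b+d}`. For `a ≥ 0 ≥ b` this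
function is bounded and analytic in the upper half-plane, so averaging it over the real line
against the Poisson kernel of a point `p`, which is a Cauchy density, gives `e_{a,b}(p)`. Hence for
`ψ = e_{c,d}` with `c ≥ 0 ≥ d` the function `ψ - ψ(p)`, weighted by the Poisson kernel, annihilates
every `e_{α,β}` with `α ≥ 0 ≥ β`.

If `(a, b)` is outside the closed quadrant, then `|e_{a,b}(p)| > 1` at some `p`, although
`|e_{a,b}| = 1` on the real line. Choosing `c = |a|` and `d = -|b|` makes `e_{a,b} ψ` bounded
analytic, and the pairing of `e_{a,b}` with `ψ - ψ(p)` is `ψ(p) (e_{a,b}(p) - m)`, where `m` is the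
Poisson average of `e_{a,b}`. It does not vanish, because `|m| ≤ 1 < |e_{a,b}(p)|`.
-/

open Filter Metric ProbabilityTheory
open UpperHalfPlane (upperHalfPlaneSet)
open scoped NNReal Topology

section CauchyMeasure

variable {E : Type*} [NormedAddCommGroup E] [NormedSpace ℝ E] {γ : ℝ≥0}

lemma integral_cauchyMeasure_eq_integral_smul (x : ℝ) (hγ : γ ≠ 0) (g : ℝ → E) :
    ∫ t, g t ∂cauchyMeasure x γ = ∫ t, cauchyPDFReal x γ t • g t := by
  rw [cauchyMeasure_of_scale_ne_zero x hγ, integral_withDensity_eq_integral_toReal_smul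
    (measurable_cauchyPDF x γ) (.of_forall fun _ => ENNReal.ofReal_lt_top)]
  simp only [cauchyPDF_def, ENNReal.toReal_ofReal (cauchyPDF_pos x hγ _).le]

lemma integrable_cauchyMeasure_iff_integrable_smul (x : ℝ) (hγ : γ ≠ 0) {g : ℝ → E} :
    Integrable g (cauchyMeasure x γ) ↔ Integrable fun t => cauchyPDFReal x γ t • g t := by
  rw [cauchyMeasure_of_scale_ne_zero x hγ, integrable_withDensity_iff_integrable_smul'
    (measurable_cauchyPDF x γ) (.of_forall fun _ => ENNReal.ofReal_lt_top)]
  simp only [cauchyPDF_def, ENNReal.toReal_ofReal (cauchyPDF_pos x hγ _).le]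

lemma cauchyMeasure_absolutelyContinuous (x : ℝ) (hγ : γ ≠ 0) : cauchyMeasure x γ ≪ volume := by
  rw [cauchyMeasure_of_scale_ne_zero x hγ]
  exact withDensity_absolutelyContinuous _ _

lemma hasDerivAt_arctan_sub_div (x t : ℝ) (hγ : γ ≠ 0) :
    HasDerivAt (fun t => arctan ((t - x) / γ)) (π * cauchyPDFReal x γ t) t := by
  convert (((hasDerivAt_id' t).sub_const x).div_const (γ : ℝ)).arctan using 1
  rw [cauchyPDFReal_def', NNReal.coe_inv]
  field

lemma integral_comp_arctan_cauchyMeasure (x : ℝ) (hγ : γ ≠ 0) (g : ℝ → E) :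
    ∫ t, g (arctan ((t - x) / γ)) ∂cauchyMeasure x γ = π⁻¹ • ∫ θ in -(π / 2)..π / 2, g θ := by
  have hγ' : (γ : ℝ) ≠ 0 := NNReal.coe_ne_zero.mpr hγ
  have hsurj : Function.Surjective fun t : ℝ => (t - x) / γ := fun s =>
    ⟨s * γ + x, by simp [hγ']⟩
  have hinj : Function.Injective fun t : ℝ => arctan ((t - x) / γ) := fun s t hst => by
    simpa [hγ'] using arctan_injective hst
  have himage : (fun t : ℝ => arctan ((t - x) / γ)) '' Set.univ = Set.Ioo (-(π / 2)) (π / 2) := by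
    rw [Set.image_univ, ← range_arctan]
    exact hsurj.range_comp arctan
  rw [intervalIntegral.integral_of_le (by linarith [pi_pos]), integral_Ioc_eq_integral_Ioo,
    ← himage, integral_image_eq_integral_abs_deriv_smul MeasurableSet.univ
      (fun t _ => (hasDerivAt_arctan_sub_div x t hγ).hasDerivWithinAt) hinj.injOn,
    Measure.restrict_univ, integral_cauchyMeasure_eq_integral_smul x hγ, ← integral_smul]
  congr with t
  rw [smul_smul, abs_of_pos (mul_pos pi_pos (cauchyPDF_pos x hγ t)),
    inv_mul_cancel_left₀ pi_ne_zero]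

lemma circleAverage_eq_integral_cauchyMeasure (x : ℝ) (hγ : γ ≠ 0) (f : ℂ → E) (c : ℂ) (R : ℝ) :
    circleAverage f c R =
      ∫ t, f (circleMap c R (2 * arctan ((t - x) / γ))) ∂cauchyMeasure x γ := by
  rw [integral_comp_arctan_cauchyMeasure x hγ (fun θ => f (circleMap c R (2 * θ))),
    intervalIntegral.integral_comp_mul_left (fun θ => f (circleMap c R θ)) two_ne_zero,
    circleAverage_eq_integral_add (-π),
    intervalIntegral.integral_comp_add_right (fun θ => f (circleMap c R θ)), smul_smul]
  congr 2 <;> ring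

end CauchyMeasure

section PoissonFormula

/-- The Cayley transform of the unit disc onto the upper half-plane, normalised to send the centre
to `x + γ i` and the boundary point `-1` to infinity. -/
noncomputable def discToHalfPlane (x γ : ℝ) (w : ℂ) : ℂ :=
  x + γ * (Complex.I * ((1 - w) / (1 + w)))

variable {w : ℂ}

lemma discToHalfPlane_zero (x γ : ℝ) : discToHalfPlane x γ 0 = x + γ * Complex.I := by
  simp [discToHalfPlane]

lemma differentiableAt_discToHalfPlane (x γ : ℝ) (hw : 1 + w ≠ 0) :
    DifferentiableAt ℂ (discToHalfPlane x γ) w := by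
  unfold discToHalfPlane
  fun_prop (disch := assumption)

lemma one_add_ne_zero_of_mem_ball (hw : w ∈ ball (0 : ℂ) 1) : 1 + w ≠ 0 := fun h => by
  simp [eq_neg_of_add_eq_zero_right h] at hw

lemma im_discToHalfPlane (x γ : ℝ) (w : ℂ) :
    (discToHalfPlane x γ w).im = γ * ((1 - ‖w‖ ^ 2) / Complex.normSq (1 + w)) := by
  have hre : ((1 - w) / (1 + w)).re = (1 - ‖w‖ ^ 2) / Complex.normSq (1 + w) := by
    rw [Complex.div_re, ← add_div, Complex.sq_norm, Complex.normSq_apply w]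
    simp only [Complex.sub_re, Complex.sub_im, Complex.add_re, Complex.add_im, Complex.one_re,
      Complex.one_im]
    ring
  simp [discToHalfPlane, hre]

lemma discToHalfPlane_mem_upperHalfPlaneSet (x : ℝ) {γ : ℝ} (hγ : 0 < γ)
    (hw : w ∈ ball (0 : ℂ) 1) : discToHalfPlane x γ w ∈ upperHalfPlaneSet := by
  have hnorm : 0 < 1 - ‖w‖ ^ 2 := by
    rw [mem_ball_zero_iff] at hw
    nlinarith [norm_nonneg w]
  rw [Set.mem_ofPred_eq, im_discToHalfPlane]
  exact mul_pos hγ (div_pos hnorm (Complex.normSq_pos.mpr (one_add_ne_zero_of_mem_ball hw)))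

lemma circleMap_mem_ball_zero_one {r : ℝ} (hr : r ∈ Set.Ioo 0 1) (θ : ℝ) :
    circleMap 0 r θ ∈ ball (0 : ℂ) 1 := by
  simpa [abs_of_pos hr.1] using hr.2

lemma one_add_exp_two_mul_I (z : ℂ) :
    1 + Complex.exp (2 * z * Complex.I) = 2 * Complex.cos z * Complex.exp (z * Complex.I) := by
  rw [Complex.two_cos, add_mul, ← Complex.exp_add, ← Complex.exp_add, ← add_mul, ← add_mul,
    ← two_mul, neg_add_cancel, zero_mul, Complex.exp_zero, add_comm]

lemma one_sub_exp_two_mul_I (z : ℂ) :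
    1 - Complex.exp (2 * z * Complex.I) =
      -Complex.I * (2 * Complex.sin z) * Complex.exp (z * Complex.I) := by
  have h : Complex.exp (-z * Complex.I) * Complex.exp (z * Complex.I) = 1 := by
    rw [← Complex.exp_add, neg_mul, neg_add_cancel, Complex.exp_zero]
  rw [Complex.two_sin, mul_assoc 2, two_mul, Complex.exp_add]
  linear_combination -h + (Complex.exp (-z * Complex.I) * Complex.exp (z * Complex.I) -
    Complex.exp (z * Complex.I) ^ 2) * Complex.I_sq

lemma discToHalfPlane_exp_two_mul_I (x γ : ℝ) (z : ℂ) :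
    discToHalfPlane x γ (Complex.exp (2 * z * Complex.I)) = x + γ * Complex.tan z := by
  rw [discToHalfPlane, one_sub_exp_two_mul_I, one_add_exp_two_mul_I,
    mul_div_mul_right _ _ (Complex.exp_ne_zero _), mul_div_assoc,
    mul_div_mul_left _ _ two_ne_zero, ← mul_assoc Complex.I, mul_neg, Complex.I_mul_I, neg_neg,
    one_mul, Complex.tan]

lemma tendsto_discToHalfPlane_circleMap (x : ℝ) {γ : ℝ} (hγ : 0 < γ) {θ : ℝ}
    (hθ : cos θ ≠ 0) :
    Tendsto (fun r => discToHalfPlane x γ (circleMap 0 r (2 * θ))) (𝓝[<] 1)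
      (𝓝[upperHalfPlaneSet] ((x + γ * tan θ : ℝ) : ℂ)) := by
  have hboundary : circleMap 0 1 (2 * θ) = Complex.exp (2 * θ * Complex.I) := by
    simp [circleMap_zero]
  have hne : 1 + circleMap 0 1 (2 * θ) ≠ 0 := by
    rw [hboundary, one_add_exp_two_mul_I]
    exact mul_ne_zero (mul_ne_zero two_ne_zero (mod_cast hθ)) (Complex.exp_ne_zero _)
  have hradial : Continuous fun r => circleMap 0 r (2 * θ) := by
    unfold circleMap
    fun_prop
  push_cast
  rw [← discToHalfPlane_exp_two_mul_I, ← hboundary]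
  refine tendsto_nhdsWithin_iff.mpr ⟨?_, ?_⟩
  · exact (differentiableAt_discToHalfPlane x γ hne).continuousAt.tendsto.comp
      (hradial.continuousAt.mono_left nhdsWithin_le_nhds)
  · filter_upwards [Ioo_mem_nhdsLT one_pos] with r hr
    exact discToHalfPlane_mem_upperHalfPlaneSet x hγ (circleMap_mem_ball_zero_one hr _)

variable {E : Type*} [NormedAddCommGroup E] [NormedSpace ℂ E] {H : ℂ → E} {γ : ℝ≥0}

lemma differentiableOn_comp_discToHalfPlane (x : ℝ) {γ : ℝ} (hγ : 0 < γ)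
    (hH : DifferentiableOn ℂ H upperHalfPlaneSet) :
    DifferentiableOn ℂ (H ∘ discToHalfPlane x γ) (ball 0 1) :=
  hH.comp (fun _ hw => (differentiableAt_discToHalfPlane x γ
      (one_add_ne_zero_of_mem_ball hw)).differentiableWithinAt)
    fun _ hw => discToHalfPlane_mem_upperHalfPlaneSet x hγ hw

lemma integral_comp_discToHalfPlane_circleMap [CompleteSpace E] (x : ℝ) (hγ : γ ≠ 0)
    (hH : DifferentiableOn ℂ H upperHalfPlaneSet) {r : ℝ} (hr : r ∈ Set.Ioo 0 1) :
    ∫ t, H (discToHalfPlane x γ (circleMap 0 r (2 * arctan ((t - x) / γ)))) ∂cauchyMeasure x γ =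
      H (x + γ * Complex.I) := by
  have hsub : closedBall (0 : ℂ) |r| ⊆ ball 0 1 :=
    closedBall_subset_ball ((abs_of_pos hr.1).trans_lt hr.2)
  have hmean := ((differentiableOn_comp_discToHalfPlane x (NNReal.coe_pos.mpr hγ.bot_lt)
    hH).diffContOnCl_ball hsub).circleAverage
  rwa [circleAverage_eq_integral_cauchyMeasure x hγ, Function.comp_apply,
    discToHalfPlane_zero] at hmean

/-- **Poisson integral formula** in the upper half-plane: the mean value property on the circles
`|w| = r < 1` of the Cayley transform, in the limit `r → 1`. -/
theorem integral_cauchyMeasure_eq_of_tendsto_boundary [CompleteSpace E] {h : ℝ → E} {C : ℝ} (x : ℝ)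
    (hγ : γ ≠ 0) (hH : DifferentiableOn ℂ H upperHalfPlaneSet)
    (hC : ∀ z ∈ upperHalfPlaneSet, ‖H z‖ ≤ C)
    (hlim : ∀ᵐ t : ℝ, Tendsto H (𝓝[upperHalfPlaneSet] t) (𝓝 (h t))) :
    ∫ t, h t ∂cauchyMeasure x γ = H (x + γ * Complex.I) := by
  have hγ_pos : 0 < (γ : ℝ) := NNReal.coe_pos.mpr hγ.bot_lt
  set G : ℝ → ℝ → E := fun r t =>
    H (discToHalfPlane x γ (circleMap 0 r (2 * arctan ((t - x) / γ))))
  have hev : ∀ᶠ r in 𝓝[<] (1 : ℝ), r ∈ Set.Ioo (0 : ℝ) 1 := Ioo_mem_nhdsLT one_pos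
  have hG_cont : ∀ r ∈ Set.Ioo (0 : ℝ) 1, Continuous (G r) := fun r hr =>
    (differentiableOn_comp_discToHalfPlane x hγ_pos hH).continuousOn.comp_continuous
      (by fun_prop) fun t => circleMap_mem_ball_zero_one hr _
  have hG_bound : ∀ r ∈ Set.Ioo (0 : ℝ) 1, ∀ t, ‖G r t‖ ≤ C := fun r hr t =>
    hC _ (discToHalfPlane_mem_upperHalfPlaneSet x hγ_pos (circleMap_mem_ball_zero_one hr _))
  have hG_lim : ∀ᵐ t ∂cauchyMeasure x γ, Tendsto (G · t) (𝓝[<] 1) (𝓝 (h t)) := by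
    filter_upwards [cauchyMeasure_absolutelyContinuous x hγ hlim] with t ht
    have hradial := tendsto_discToHalfPlane_circleMap x hγ_pos (cos_arctan_pos ((t - x) / γ)).ne'
    rw [tan_arctan, mul_div_cancel₀ _ hγ_pos.ne', add_sub_cancel] at hradial
    exact ht.comp hradial
  have hlim_integral : Tendsto (fun r => ∫ t, G r t ∂cauchyMeasure x γ) (𝓝[<] 1)
      (𝓝 (∫ t, h t ∂cauchyMeasure x γ)) :=
    tendsto_integral_filter_of_norm_le_const
      (hev.mono fun r hr => (hG_cont r hr).aestronglyMeasurable)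
      ⟨C, hev.mono fun r hr => .of_forall (hG_bound r hr)⟩ hG_lim
  refine tendsto_nhds_unique hlim_integral (tendsto_const_nhds.congr' ?_)
  filter_upwards [hev] with r hr
  exact (integral_comp_discToHalfPlane_circleMap x hγ hH hr).symm

end PoissonFormula

section HyperbolaExp

/-- The function `e^{i(az + b/z)}`: on the real line it is the character of the hyperbola `xy = 1`
with frequency `(a, b)`, and it is taken on all of `ℂ` so that for `a ≥ 0 ≥ b` it is also the
bounded analytic extension of that character to the upper half-plane. Its value at `0` is `1`. -/
noncomputable def hyperbolaExp (a b : ℝ) (z : ℂ) : ℂ :=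
  Complex.exp (Complex.I * (a * z + b / z))

variable {a b c d : ℝ}

lemma hyperbolaExp_ne_zero (a b : ℝ) (z : ℂ) : hyperbolaExp a b z ≠ 0 :=
  Complex.exp_ne_zero _

lemma hyperbolaExp_mul (a b c d : ℝ) (z : ℂ) :
    hyperbolaExp a b z * hyperbolaExp c d z = hyperbolaExp (a + c) (b + d) z := by
  unfold hyperbolaExp
  rw [← Complex.exp_add]
  push_cast
  ring_nf

lemma norm_hyperbolaExp (a b : ℝ) (z : ℂ) :
    ‖hyperbolaExp a b z‖ = rexp (-((a - b / Complex.normSq z) * z.im)) := by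
  rw [hyperbolaExp, Complex.norm_exp, Complex.I_mul_re, Complex.add_im, Complex.im_ofReal_mul,
    Complex.div_im, Complex.ofReal_re, Complex.ofReal_im]
  congr 1
  ring

lemma norm_hyperbolaExp_ofReal (a b t : ℝ) : ‖hyperbolaExp a b t‖ = 1 := by
  simp [norm_hyperbolaExp]

lemma norm_hyperbolaExp_le_one (ha : 0 ≤ a) (hb : b ≤ 0) {z : ℂ} (hz : 0 ≤ z.im) :
    ‖hyperbolaExp a b z‖ ≤ 1 := by
  rw [norm_hyperbolaExp, exp_le_one_iff, neg_nonpos]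
  have hdiv : b / Complex.normSq z ≤ 0 :=
    div_nonpos_of_nonpos_of_nonneg hb (Complex.normSq_nonneg z)
  exact mul_nonneg (by linarith) hz

lemma measurable_hyperbolaExp (a b : ℝ) : Measurable (hyperbolaExp a b) := by
  unfold hyperbolaExp
  fun_prop

lemma differentiableAt_hyperbolaExp (a b : ℝ) {z : ℂ} (hz : z ≠ 0) :
    DifferentiableAt ℂ (hyperbolaExp a b) z := by
  unfold hyperbolaExp
  fun_prop (disch := assumption)

lemma integrable_hyperbolaExp (a b : ℝ) (μ : Measure ℝ) [IsFiniteMeasure μ] :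
    Integrable (fun t : ℝ => hyperbolaExp a b t) μ :=
  .of_bound ((measurable_hyperbolaExp a b).comp Complex.measurable_ofReal).aestronglyMeasurable 1
    (.of_forall fun t => (norm_hyperbolaExp_ofReal a b t).le)

lemma norm_integral_hyperbolaExp_le_one (a b : ℝ) (μ : Measure ℝ) [IsProbabilityMeasure μ] :
    ‖∫ t : ℝ, hyperbolaExp a b t ∂μ‖ ≤ 1 := by
  simpa using norm_integral_le_of_norm_le_const (μ := μ)
    (.of_forall fun t => (norm_hyperbolaExp_ofReal a b t).le)

variable {γ : ℝ≥0}

lemma integral_hyperbolaExp_cauchyMeasure (ha : 0 ≤ a) (hb : b ≤ 0) (x : ℝ) (hγ : γ ≠ 0) :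
    ∫ t : ℝ, hyperbolaExp a b t ∂cauchyMeasure x γ = hyperbolaExp a b (x + γ * Complex.I) := by
  refine integral_cauchyMeasure_eq_of_tendsto_boundary (C := 1) x hγ ?_ ?_ ?_
  · intro z hz
    have hz' : z ≠ 0 := fun h => by simp [h] at hz
    exact (differentiableAt_hyperbolaExp a b hz').differentiableWithinAt
  · exact fun z hz => norm_hyperbolaExp_le_one ha hb (le_of_lt hz)
  · filter_upwards [compl_mem_ae_iff.mpr (measure_singleton (0 : ℝ))] with t ht
    exact (differentiableAt_hyperbolaExp a b (Complex.ofReal_ne_zero.mpr ht)).continuousAt.mono_left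
      nhdsWithin_le_nhds

lemma integral_hyperbolaExp_mul_sub_const (a b c d : ℝ) (e : ℂ) (μ : Measure ℝ)
    [IsFiniteMeasure μ] :
    ∫ t : ℝ, hyperbolaExp a b t * (hyperbolaExp c d t - e) ∂μ =
      ∫ t : ℝ, hyperbolaExp (a + c) (b + d) t ∂μ - (∫ t : ℝ, hyperbolaExp a b t ∂μ) * e := by
  simp only [mul_sub, hyperbolaExp_mul]
  rw [integral_sub (integrable_hyperbolaExp _ _ μ) ((integrable_hyperbolaExp a b μ).mul_const e),
    integral_mul_const]

lemma integral_hyperbolaExp_mul_sub_cauchyMeasure (hac : 0 ≤ a + c) (hbd : b + d ≤ 0) (x : ℝ)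
    (hγ : γ ≠ 0) :
    ∫ t : ℝ, hyperbolaExp a b t * (hyperbolaExp c d t - hyperbolaExp c d (x + γ * Complex.I))
        ∂cauchyMeasure x γ =
      (hyperbolaExp a b (x + γ * Complex.I) - ∫ t : ℝ, hyperbolaExp a b t ∂cauchyMeasure x γ) *
        hyperbolaExp c d (x + γ * Complex.I) := by
  rw [integral_hyperbolaExp_mul_sub_const, integral_hyperbolaExp_cauchyMeasure hac hbd x hγ,
    ← hyperbolaExp_mul, sub_mul]

lemma exists_pos_mul_lt_of_neg_or_pos (hab : a < 0 ∨ 0 < b) : ∃ s : ℝ, 0 < s ∧ a * s < b := by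
  rcases hab with ha | hb
  · exact ((eventually_gt_atTop 0).and
      ((tendsto_id.const_mul_atTop_of_neg ha).eventually_lt_atBot b)).exists
  · have hlim : Tendsto (fun s => a * s) (𝓝[>] 0) (𝓝 0) :=
      (Continuous.tendsto' (by fun_prop) 0 0 (mul_zero a)).mono_left nhdsWithin_le_nhds
    exact (eventually_mem_nhdsWithin.and (hlim.eventually_lt_const hb)).exists

lemma exists_one_lt_norm_hyperbolaExp (hab : a < 0 ∨ 0 < b) :
    ∃ (x : ℝ) (γ : ℝ≥0), γ ≠ 0 ∧ 1 < ‖hyperbolaExp a b (x + γ * Complex.I)‖ := by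
  obtain ⟨s, hs, hlt⟩ := exists_pos_mul_lt_of_neg_or_pos hab
  have hγ : 0 < √s := sqrt_pos.mpr hs
  refine ⟨0, (√s).toNNReal, (toNNReal_pos.mpr hγ).ne', ?_⟩
  have hexponent : (a - b / s) * √s < 0 :=
    mul_neg_of_neg_of_pos (sub_neg.mpr ((lt_div_iff₀ hs).mpr hlt)) hγ
  simpa [norm_hyperbolaExp, hs.le] using hexponent

end HyperbolaExp

theorem stmt_6_general {a b : ℝ} (hab : a < 0 ∨ 0 < b) :
    ∃ f : ℝ → ℂ, Integrable f ∧
      (∀ α β : ℝ, 0 ≤ α → β ≤ 0 → ∫ t : ℝ, hyperbolaExp α β t * f t = 0) ∧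
      ∫ t : ℝ, hyperbolaExp a b t * f t ≠ 0 := by
  obtain ⟨x, γ, hγ, hlarge⟩ := exists_one_lt_norm_hyperbolaExp hab
  have hc : 0 ≤ |a| := abs_nonneg a
  have hd : -|b| ≤ 0 := neg_nonpos.mpr (abs_nonneg b)
  set g : ℝ → ℂ := fun t =>
    hyperbolaExp |a| (-|b|) t - hyperbolaExp |a| (-|b|) (x + γ * Complex.I)
  have hdensity : ∀ α β : ℝ, ∫ t : ℝ, hyperbolaExp α β t * (cauchyPDFReal x γ t • g t) =
      ∫ t : ℝ, hyperbolaExp α β t * g t ∂cauchyMeasure x γ := fun α β => by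
    simp only [integral_cauchyMeasure_eq_integral_smul x hγ, mul_smul_comm]
  refine ⟨fun t => cauchyPDFReal x γ t • g t, ?_, fun α β hα hβ => ?_, ?_⟩
  · rw [← integrable_cauchyMeasure_iff_integrable_smul x hγ]
    exact (integrable_hyperbolaExp _ _ _).sub (integrable_const _)
  · rw [hdensity, integral_hyperbolaExp_mul_sub_cauchyMeasure (add_nonneg hα hc)
      (add_nonpos hβ hd) x hγ, integral_hyperbolaExp_cauchyMeasure hα hβ x hγ, sub_self, zero_mul]
  · rw [hdensity, integral_hyperbolaExp_mul_sub_cauchyMeasure (by linarith [neg_abs_le a])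
      (by linarith [le_abs_self b]) x hγ]
    refine mul_ne_zero (sub_ne_zero.mpr fun heq => ?_) (hyperbolaExp_ne_zero _ _ _)
    exact hlarge.not_ge (heq ▸ norm_integral_hyperbolaExp_le_one a b _)

/-- If `(a, b)` lies outside the closed quadrant `{a ≥ 0, b ≤ 0}`, then there
is an `H¹₊(ℝ)` function whose integral against `e^{i(at + b/t)}` is nonzero. -/
theorem stmt_6 (a b : ℝ) (hab : a < 0 ∨ 0 < b) :
    ∃ f : ℝ → ℂ, Integrable f ∧
      (∀ y : ℝ, 0 ≤ y → ∫ t : ℝ, Complex.exp (Complex.I * y * t) * f t = 0) ∧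
      (∫ t : ℝ, Complex.exp (Complex.I * (a * t + b / t)) * f t) ≠ 0 := by
  obtain ⟨f, hf, hquadrant, hne⟩ := stmt_6_general hab
  exact ⟨f, hf, fun y hy => by simpa [hyperbolaExp, mul_assoc] using hquadrant y 0 hy le_rfl, hne⟩
end

section
/- Fix a positive real number β, and let (a, b) ∈ ℝ² be a point that is neither of the form (m, 0) with m a nonnegative integer nor of the form (0, βn) with n a positive integer. Then there exists f ∈ L¹(ℝ, ℂ) such that ∫_ℝ e^{iπmt} f(t) dt = 0 for every integer m ≥ 0, ∫_ℝ e^{iπβn/t} f(t) dt = 0 for every integer n ≥ 1, and ∫_ℝ e^{iπ(at + b/t)} f(t) dt ≠ 0. -/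
open MeasureTheory Real

/-! Write `T f x y` for the integral of `exp (iπ (x t + y / t)) f t`. The Fourier transform of
`t ↦ exp (iπ y / t)` is explicit: it is a point mass at the origin plus a multiple of a
Bessel–Clifford function carried by a half-line, because `exp (a / p)` is the Laplace transform of
such a distribution and `iπ t` is a boundary value of `p` from the right half-plane. Hence `T f` is
determined by its values on the first axis: for `y ≠ 0`, the difference `T f x y - T f x 0` is a
nonzero multiple of the integral of `T f w 0` over `w < x` (if `0 < y`) or `x < w` (if `y < 0`),
against a kernel that is analytic in `w` and equal to one at `w = x`.

Fourier inversion realizes any test function as `T f · 0`. If it is supported in `(0, ∞)` away from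
the lattice points, then `T f` vanishes at these lattice points and on the half-line
`{0} × [0, ∞)`, while the analytic kernel leaves enough freedom to make `T f a b ≠ 0` whenever
`b < 0`, or `0 < a` and `(a, b)` is not a lattice point. The inversion `t ↦ 1 / t` exchanges the
two axes and takes care of the remaining points.
-/

open Filter Set Topology
open scoped ContDiff Nat

/-! ### The Bessel–Clifford function and its Laplace transform -/

/-- The Bessel–Clifford function of order one, `z ↦ ∑ zⁿ / (n! (n + 1)!)`, as a regularized `₀F₁`.
In terms of the Bessel function, `besselClifford (-x) = J₁(2√x) / √x` for `x > 0`. -/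
noncomputable def besselClifford : ℂ → ℂ := Complex.regularizedHGFun 0 {2}

lemma hasSum_besselClifford (z : ℂ) :
    HasSum (fun n : ℕ ↦ z ^ n / (n ! * (n + 1)!)) (besselClifford z) := by
  have hradius := Complex.radius_regularizedHGFunSeries_eq_top (a := 0) (b := {2}) (by simp)
  convert! (Complex.regularizedHGFunSeries 0 {2}).hasSum (x := z) (by simp [hradius]) using 2
    with n
  have hGamma : Complex.Gamma (2 + n) = (n + 1)! := by
    rw [← Complex.Gamma_nat_eq_factorial]
    push_cast
    ring_nf
  simp [Complex.regularizedHGFunCoeff, hGamma, div_eq_mul_inv]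

lemma besselClifford_zero : besselClifford 0 = 1 := by
  refine (hasSum_besselClifford 0).unique ?_
  convert hasSum_single (f := fun n : ℕ ↦ (0 : ℂ) ^ n / (n ! * (n + 1)!)) 0 ?_ using 1
  · simp
  · intro n hn
    simp [hn]

lemma analyticOnNhd_besselClifford : AnalyticOnNhd ℂ besselClifford univ := by
  have hradius := Complex.radius_regularizedHGFunSeries_eq_top (a := 0) (b := {2}) (by simp)
  have h := (Complex.regularizedHGFunSeries 0 {2}).hasFPowerSeriesOnBall (by simp [hradius])
  rw [hradius] at h
  rw [← Metric.eball_top]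
  exact h.analyticOnNhd

@[fun_prop]
lemma continuous_besselClifford : Continuous besselClifford :=
  continuousOn_univ.1 analyticOnNhd_besselClifford.continuousOn

lemma hasSum_pow_div_factorial (x : ℝ) : HasSum (fun n : ℕ ↦ x ^ n / n !) (exp x) := by
  rw [exp_eq_exp_ℝ]
  exact NormedSpace.expSeries_div_hasSum_exp x

-- Splitting `a * u = (a / c) * (c * u)`, one of the two factorials absorbs the powers of `a / c`.
lemma norm_pow_div_factorial_mul_factorial_succ_le (a : ℂ) {c u : ℝ} (hc : 0 < c) (hu : 0 ≤ u)
    (n : ℕ) : ‖(a * u) ^ n / (n ! * (n + 1)!)‖ ≤ exp (‖a‖ / c) * ((c * u) ^ n / n !) := by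
  calc ‖(a * u) ^ n / (n ! * (n + 1)!)‖
      = (‖a‖ / c) ^ n / (n + 1)! * ((c * u) ^ n / n !) := by
        simp only [norm_div, norm_pow, norm_mul, Complex.norm_natCast, mul_pow, div_pow,
          Complex.norm_of_nonneg hu]
        field_simp
    _ ≤ (‖a‖ / c) ^ n / n ! * ((c * u) ^ n / n !) := by gcongr; omega
    _ ≤ exp (‖a‖ / c) * ((c * u) ^ n / n !) := by
        gcongr
        exact pow_div_factorial_le_exp _ (by positivity) n

lemma norm_besselClifford_mul_le (a : ℂ) {c u : ℝ} (hc : 0 < c) (hu : 0 ≤ u) :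
    ‖besselClifford (a * u)‖ ≤ exp (‖a‖ / c) * exp (c * u) := by
  rw [← (hasSum_besselClifford (a * u)).tsum_eq]
  exact tsum_of_norm_bounded ((hasSum_pow_div_factorial (c * u)).mul_left _)
    (norm_pow_div_factorial_mul_factorial_succ_le a hc hu)

lemma integrableOn_pow_mul_cexp_neg_mul {p : ℂ} (hp : 0 < p.re) (n : ℕ) :
    IntegrableOn (fun u : ℝ ↦ (u : ℂ) ^ n * Complex.exp (-p * u)) (Ioi 0) := by
  have h := integrableOn_rpow_mul_exp_neg_mul_rpow (p := 1) (s := n)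
    (neg_one_lt_zero.trans_le n.cast_nonneg) one_pos hp
  refine h.mono' (by fun_prop) ?_
  filter_upwards [ae_restrict_mem measurableSet_Ioi] with u hu
  simp [Complex.norm_exp, abs_of_pos (mem_Ioi.1 hu)]

lemma tendsto_pow_mul_cexp_neg_mul_atTop {p : ℂ} (hp : 0 < p.re) (n : ℕ) :
    Tendsto (fun u : ℝ ↦ (u : ℂ) ^ n * Complex.exp (-p * u)) atTop (𝓝 0) := by
  rw [tendsto_zero_iff_norm_tendsto_zero]
  refine (tendsto_rpow_mul_exp_neg_mul_atTop_nhds_zero n p.re hp).congr' ?_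
  filter_upwards [eventually_gt_atTop 0] with u hu
  simp [Complex.norm_exp, abs_of_pos hu]

lemma integral_pow_mul_cexp_neg_mul {p : ℂ} (hp : 0 < p.re) (n : ℕ) :
    ∫ u in Ioi (0 : ℝ), (u : ℂ) ^ n * Complex.exp (-p * u) = n ! / p ^ (n + 1) := by
  have hp0 : p ≠ 0 := by rintro rfl; simp at hp
  induction n with
  | zero => simpa using integral_exp_mul_complex_Ioi (a := -p) (by simpa using hp) 0
  | succ n ih =>
    have hderiv (u : ℝ) : HasDerivAt (fun u : ℝ ↦ (u : ℂ) ^ (n + 1) * Complex.exp (-p * u))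
        ((n + 1) * ((u : ℂ) ^ n * Complex.exp (-p * u)) -
          p * ((u : ℂ) ^ (n + 1) * Complex.exp (-p * u))) u := by
      have hpow := (hasDerivAt_pow (n + 1) (u : ℂ)).comp_ofReal
      have hexp := ((hasDerivAt_id (u : ℂ)).const_mul (-p)).cexp.comp_ofReal
      convert! hpow.mul hexp using 1
      simp only [neg_mul, Nat.cast_add, Nat.cast_one, add_tsub_cancel_right, id_eq, mul_one,
        mul_neg]
      ring
    have h := integral_Ioi_of_hasDerivAt_of_tendsto' (a := 0) (fun u _ ↦ hderiv u)
      (((integrableOn_pow_mul_cexp_neg_mul hp n).const_mul _).sub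
        ((integrableOn_pow_mul_cexp_neg_mul hp (n + 1)).const_mul p))
      (tendsto_pow_mul_cexp_neg_mul_atTop hp (n + 1))
    rw [integral_sub ((integrableOn_pow_mul_cexp_neg_mul hp n).const_mul _)
      ((integrableOn_pow_mul_cexp_neg_mul hp (n + 1)).const_mul p), integral_const_mul,
      integral_const_mul, ih] at h
    simp only [Complex.ofReal_zero, ne_eq, Nat.add_eq_zero_iff, one_ne_zero, and_false,
      not_false_eq_true, zero_pow, zero_mul, sub_zero, sub_eq_zero] at h
    rw [← mul_right_inj' hp0, ← h, Nat.factorial_succ]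
    push_cast
    field_simp
    ring

lemma integrableOn_besselClifford_mul_cexp {p : ℂ} (hp : 0 < p.re) (a : ℂ) :
    IntegrableOn (fun u : ℝ ↦ besselClifford (a * u) * Complex.exp (-p * u)) (Ioi 0) := by
  have hbound : IntegrableOn
      (fun u : ℝ ↦ exp (‖a‖ / (p.re / 2)) * exp (-(p.re / 2) * u)) (Ioi 0) :=
    (integrableOn_exp_mul_Ioi (by linarith) 0).const_mul _
  refine hbound.mono' (by fun_prop) ?_
  filter_upwards [ae_restrict_mem measurableSet_Ioi] with u hu
  calc ‖besselClifford (a * u) * Complex.exp (-p * u)‖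
      ≤ exp (‖a‖ / (p.re / 2)) * exp (p.re / 2 * u) * exp (-p.re * u) := by
        rw [norm_mul, Complex.norm_exp]
        gcongr
        · exact norm_besselClifford_mul_le a (half_pos hp) hu.le
        · simp
    _ = exp (‖a‖ / (p.re / 2)) * exp (-(p.re / 2) * u) := by
        rw [mul_assoc, ← exp_add]
        ring_nf

lemma hasSum_integral_besselClifford_mul_cexp {p : ℂ} (hp : 0 < p.re) (a : ℂ) :
    HasSum (fun n : ℕ ↦ a ^ n / ((n + 1)! * p ^ (n + 1)))
      (∫ u in Ioi (0 : ℝ), besselClifford (a * u) * Complex.exp (-p * u)) := by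
  have hterm (n : ℕ) :
      ∫ u in Ioi (0 : ℝ), (a * u) ^ n / (n ! * (n + 1)!) * Complex.exp (-p * u) =
        a ^ n / ((n + 1)! * p ^ (n + 1)) := by
    have hfact : (n ! : ℂ) ≠ 0 := Nat.cast_ne_zero.2 n.factorial_ne_zero
    calc _ = a ^ n / (n ! * (n + 1)!) * (n ! / p ^ (n + 1)) := by
          rw [← integral_pow_mul_cexp_neg_mul hp, ← integral_const_mul]
          congr with u
          ring
      _ = _ := by field_simp
  have hbound (u : ℝ) : HasSum
      (fun n : ℕ ↦ exp (‖a‖ / (p.re / 2)) * ((p.re / 2 * u) ^ n / n !) * exp (-p.re * u))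
      (exp (‖a‖ / (p.re / 2)) * exp (-(p.re / 2) * u)) := by
    convert! ((hasSum_pow_div_factorial (p.re / 2 * u)).mul_left _).mul_right _ using 1
    simp only [← exp_add]
    ring_nf
  simp_rw [← hterm]
  refine hasSum_integral_of_dominated_convergence _ (fun n ↦ by fun_prop) (fun n ↦ ?_)
    (.of_forall fun u ↦ (hbound u).summable) ?_
    (.of_forall fun u ↦ (hasSum_besselClifford (a * u)).mul_right (Complex.exp (-p * u)))
  · filter_upwards [ae_restrict_mem measurableSet_Ioi] with u hu
    rw [norm_mul, Complex.norm_exp]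
    refine mul_le_mul (norm_pow_div_factorial_mul_factorial_succ_le a (half_pos hp) hu.le n)
      (by simp) (exp_nonneg _) (mul_nonneg (exp_nonneg _) ?_)
    have := mem_Ioi.1 hu
    positivity
  · simp_rw [fun u ↦ (hbound u).tsum_eq]
    exact (integrableOn_exp_mul_Ioi (by linarith) 0).const_mul _

lemma cexp_div_eq_one_add_integral_besselClifford {p : ℂ} (hp : 0 < p.re) (a : ℂ) :
    Complex.exp (a / p) =
      1 + a * ∫ u in Ioi (0 : ℝ), besselClifford (a * u) * Complex.exp (-p * u) := by
  have hexp := NormedSpace.expSeries_div_hasSum_exp (a / p)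
  rw [← Complex.exp_eq_exp_ℂ, ← hasSum_nat_add_iff' 1] at hexp
  have h := ((hasSum_integral_besselClifford_mul_cexp hp a).mul_left a).unique
    (hexp.congr_fun fun n ↦ ?_)
  · rw [h]
    simp
  · rw [div_pow, pow_succ' a]
    field_simp

/-! ### The transform of a density on the hyperbola -/

/-- The Fourier transform of the measure on the hyperbola `{(t, 1 / t)}` whose density in the
parameter `t` is `f`, with the frequency variables scaled by `π`. -/
noncomputable def hyperbolaTransform (f : ℝ → ℂ) (x y : ℝ) : ℂ :=
  ∫ t : ℝ, Complex.exp (Complex.I * π * (x * t + y / t)) * f t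

lemma hyperbolaTransform_comp_neg (f : ℝ → ℂ) (x y : ℝ) :
    hyperbolaTransform (fun t ↦ f (-t)) x y = hyperbolaTransform f (-x) (-y) := by
  rw [hyperbolaTransform, hyperbolaTransform, ← integral_neg_eq_self]
  simp [div_neg, neg_div]

section Inversion

variable {E : Type*} [NormedAddCommGroup E] [NormedSpace ℝ E]

lemma image_inv_compl_zero : (fun t : ℝ ↦ t⁻¹) '' {0}ᶜ = {0}ᶜ := by
  rw [image_inv_eq_inv]
  ext
  simp

lemma integral_abs_deriv_inv_smul_comp_inv (F : ℝ → E) :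
    ∫ t : ℝ, |-(t ^ 2)⁻¹| • F t⁻¹ = ∫ s, F s := by
  have h := integral_image_eq_integral_abs_deriv_smul (measurableSet_singleton (0 : ℝ)).compl
    (fun t ht ↦ (hasDerivAt_inv ht).hasDerivWithinAt) inv_injective.injOn F
  rw [image_inv_compl_zero] at h
  simpa only [restrict_compl_singleton] using h.symm

lemma integrable_abs_deriv_inv_smul_comp_inv {F : ℝ → E} :
    Integrable (fun t : ℝ ↦ |-(t ^ 2)⁻¹| • F t⁻¹) ↔ Integrable F := by
  have h := integrableOn_image_iff_integrableOn_abs_deriv_smul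
    (measurableSet_singleton (0 : ℝ)).compl
    (fun t ht ↦ (hasDerivAt_inv ht).hasDerivWithinAt) inv_injective.injOn F
  rw [image_inv_compl_zero] at h
  simpa only [IntegrableOn, restrict_compl_singleton] using h.symm

end Inversion

lemma hyperbolaTransform_abs_deriv_inv_smul_comp_inv (f : ℝ → ℂ) (x y : ℝ) :
    hyperbolaTransform (fun t ↦ |-(t ^ 2)⁻¹| • f t⁻¹) x y = hyperbolaTransform f y x := by
  simp only [hyperbolaTransform]
  rw [← integral_abs_deriv_inv_smul_comp_inv fun s : ℝ ↦
    Complex.exp (Complex.I * π * (y * s + x / s)) * f s]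
  simp [div_eq_mul_inv, add_comm, mul_left_comm]

lemma exists_integrable_hyperbolaTransform_zero_right_eq (h : SchwartzMap ℝ ℂ) :
    ∃ f : ℝ → ℂ, Integrable f ∧ ∀ x, hyperbolaTransform f x 0 = h x := by
  let ψ : SchwartzMap ℝ ℂ := FourierTransform.fourier h
  refine ⟨fun t ↦ (2⁻¹ : ℂ) * ψ (t / 2), (ψ.integrable.comp_div two_ne_zero).const_mul _,
    fun x ↦ ?_⟩
  calc hyperbolaTransform (fun t ↦ (2⁻¹ : ℂ) * ψ (t / 2)) x 0
      = 2⁻¹ * ∫ t : ℝ, Complex.exp (↑(2 * π * inner ℝ (t / 2) x) * Complex.I) • ψ (t / 2) := by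
        rw [hyperbolaTransform, ← integral_const_mul]
        congr with t
        simp only [Complex.ofReal_zero, zero_div, add_zero, RCLike.inner_apply, map_div₀,
          ringHom_apply, Complex.ofReal_mul, Complex.ofReal_ofNat, Complex.ofReal_div, smul_eq_mul]
        ring_nf
    _ = FourierTransformInv.fourierInv (ψ : ℝ → ℂ) x := by
        rw [Measure.integral_comp_div
          (fun s : ℝ ↦ Complex.exp (↑(2 * π * inner ℝ s x) * Complex.I) • ψ s), fourierInv_eq']
        simp
    _ = h x := by
        rw [← SchwartzMap.fourierInv_coe, FourierTransform.fourierInv_fourier_eq]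

/-! ### The transform in terms of its values on the first axis -/

lemma tendsto_integral_Ioi_exp_neg_mul_smul {E : Type*} [NormedAddCommGroup E] [NormedSpace ℝ E]
    {h : ℝ → E} (hh : IntegrableOn h (Ioi 0)) :
    Tendsto (fun δ : ℝ ↦ ∫ u in Ioi (0 : ℝ), exp (-δ * u) • h u) (𝓝[>] 0)
      (𝓝 (∫ u in Ioi (0 : ℝ), h u)) := by
  refine tendsto_integral_filter_of_dominated_convergence (fun u ↦ ‖h u‖) ?_ ?_ hh.norm ?_
  · filter_upwards with δ
    exact (by fun_prop : Continuous fun u ↦ exp (-δ * u)).aestronglyMeasurable.smul hh.1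
  · filter_upwards [self_mem_nhdsWithin] with δ hδ
    filter_upwards [ae_restrict_mem measurableSet_Ioi] with u hu
    rw [norm_smul, norm_of_nonneg (exp_nonneg _)]
    refine mul_le_of_le_one_left (norm_nonneg _) (exp_le_one_iff.2 ?_)
    simpa using (mul_pos (mem_Ioi.1 hδ) (mem_Ioi.1 hu)).le
  · filter_upwards with u
    have hcont : Continuous fun δ : ℝ ↦ exp (-δ * u) • h u := by fun_prop
    simpa using (hcont.tendsto 0).mono_left nhdsWithin_le_nhds

lemma integral_cexp_div_mul {g : ℝ → ℂ} (hg : Integrable g) {δ : ℝ} (hδ : 0 < δ) (a : ℂ) :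
    ∫ t : ℝ, Complex.exp (a / (δ + Complex.I * π * t)) * g t =
      (∫ t, g t) + a * ∫ u in Ioi (0 : ℝ),
        exp (-δ * u) • (besselClifford (a * u) * hyperbolaTransform g (-u) 0) := by
  have hint : Integrable (Function.uncurry fun (t u : ℝ) ↦
      besselClifford (a * u) * Complex.exp (-(δ + Complex.I * π * t) * u) * g t)
      (volume.prod (volume.restrict (Ioi 0))) := by
    have h := hg.mul_prod (integrableOn_besselClifford_mul_cexp (p := δ) (by simpa using hδ) a)
    refine h.mono (.mul ?_ hg.1.comp_fst) (.of_forall fun z ↦ ?_)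
    · exact Continuous.aestronglyMeasurable (by fun_prop)
    · simp [Function.uncurry, Complex.norm_exp, mul_comm]
  calc ∫ t : ℝ, Complex.exp (a / (δ + Complex.I * π * t)) * g t
      = ∫ t : ℝ, (g t + a * ∫ u in Ioi (0 : ℝ),
          besselClifford (a * u) * Complex.exp (-(δ + Complex.I * π * t) * u) * g t) := by
        congr with t
        rw [cexp_div_eq_one_add_integral_besselClifford (by simpa using hδ), integral_mul_const]
        ring
    _ = (∫ t, g t) + a * ∫ u in Ioi (0 : ℝ), ∫ t : ℝ,
          besselClifford (a * u) * Complex.exp (-(δ + Complex.I * π * t) * u) * g t := by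
        have hint' : Integrable fun t : ℝ ↦ ∫ u in Ioi (0 : ℝ),
            besselClifford (a * u) * Complex.exp (-(δ + Complex.I * π * t) * u) * g t :=
          hint.integral_prod_left
        rw [integral_add hg (hint'.const_mul a), integral_const_mul, integral_integral_swap hint]
    _ = _ := by
        congr with u
        rw [hyperbolaTransform, ← integral_const_mul, ← integral_smul]
        congr with t
        have hexp : Complex.exp (-(δ + Complex.I * π * t) * u) =
            exp (-δ * u) * Complex.exp (Complex.I * π * ((-u : ℝ) * t + (0 : ℝ) / t)) := by
          rw [Complex.ofReal_exp, ← Complex.exp_add]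
          push_cast
          ring_nf
        rw [hexp, Complex.real_smul]
        ring

lemma tendsto_integral_cexp_neg_div_mul {g : ℝ → ℂ} (hg : Integrable g) {y : ℝ} (hy : 0 ≤ y) :
    Tendsto (fun δ : ℝ ↦ ∫ t : ℝ, Complex.exp ((-(π ^ 2 * y) : ℝ) / (δ + Complex.I * π * t)) * g t)
      (𝓝[>] 0) (𝓝 (hyperbolaTransform g 0 y)) := by
  refine tendsto_integral_filter_of_dominated_convergence (fun t ↦ ‖g t‖) ?_ ?_ hg.norm ?_
  · exact .of_forall fun δ ↦ .mul (Measurable.aestronglyMeasurable (by fun_prop)) hg.1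
  · filter_upwards [self_mem_nhdsWithin] with δ hδ
    filter_upwards with t
    rw [norm_mul, Complex.norm_exp]
    refine mul_le_of_le_one_left (norm_nonneg _) (exp_le_one_iff.2 ?_)
    rw [Complex.ofReal_neg, neg_div, Complex.neg_re, Complex.div_re]
    have hre : 0 ≤ π ^ 2 * y * δ / Complex.normSq (δ + Complex.I * π * t) :=
      div_nonneg (mul_nonneg (by positivity) (mem_Ioi.1 hδ).le) (Complex.normSq_nonneg _)
    simpa [-Complex.ofReal_mul, -Complex.ofReal_pow] using hre
  · filter_upwards [compl_mem_ae_iff.2 (measure_singleton (0 : ℝ))] with t ht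
    have ht' : ((0 : ℝ) : ℂ) + Complex.I * π * t ≠ 0 := by
      simpa [pi_ne_zero] using ht
    have hcont : ContinuousAt (fun δ : ℝ ↦
        Complex.exp ((-(π ^ 2 * y) : ℝ) / (δ + Complex.I * π * t)) * g t) 0 := by
      fun_prop (disch := assumption)
    have hval : ((-(π ^ 2 * y) : ℝ) : ℂ) / ((0 : ℝ) + Complex.I * π * t) =
        Complex.I * π * ((0 : ℝ) * t + y / t) := by
      rw [div_eq_iff ht']
      have ht0 : (t : ℂ) ≠ 0 := by simpa using ht
      push_cast
      simp only [zero_mul, zero_add]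
      rw [mul_mul_mul_comm, ← mul_assoc]
      field_simp
      linear_combination (-y : ℂ) * Complex.I_sq
    rw [← hval]
    exact hcont.tendsto.mono_left nhdsWithin_le_nhds

lemma hyperbolaTransform_cexp_mul (f : ℝ → ℂ) (x x' y : ℝ) :
    hyperbolaTransform (fun t ↦ Complex.exp (Complex.I * π * (x * t)) * f t) x' y =
      hyperbolaTransform f (x + x') y := by
  rw [hyperbolaTransform, hyperbolaTransform]
  congr with t
  rw [← mul_assoc, ← Complex.exp_add]
  push_cast
  ring_nf

lemma hyperbolaTransform_of_nonneg {f : ℝ → ℂ} (hf : Integrable f) {x y : ℝ} (hy : 0 ≤ y)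
    (hint : IntegrableOn
      (fun w : ℝ ↦ besselClifford (π ^ 2 * y * (w - x)) * hyperbolaTransform f w 0) (Iio x)) :
    hyperbolaTransform f x y = hyperbolaTransform f x 0 - π ^ 2 * y *
      ∫ w in Iio x, besselClifford (π ^ 2 * y * (w - x)) * hyperbolaTransform f w 0 := by
  let g (t : ℝ) : ℂ := Complex.exp (Complex.I * π * (x * t)) * f t
  have hg : Integrable g := by
    refine hf.bdd_mul (c := 1) (by fun_prop) (.of_forall fun t ↦ ?_)
    simp [Complex.norm_exp]
  let k (u : ℝ) : ℂ := besselClifford ((-(π ^ 2 * y) : ℝ) * u) * hyperbolaTransform g (-u) 0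
  have hk (u : ℝ) : k u = besselClifford (π ^ 2 * y * ((x - u : ℝ) - x)) *
      hyperbolaTransform f (x - u) 0 := by
    simp only [k, g, hyperbolaTransform_cexp_mul, ← sub_eq_add_neg]
    push_cast
    ring_nf
  have hsub := Measure.measurePreserving_sub_left volume x
  have hemb := (Homeomorph.subLeft x).measurableEmbedding
  have hpre : (fun u ↦ x - u) ⁻¹' Iio x = Ioi 0 := by simp
  have hkint : IntegrableOn k (Ioi 0) := by
    rw [← hpre, funext hk]
    exact (hsub.integrableOn_comp_preimage hemb).2 hint
  have hkeq : ∫ u in Ioi 0, k u =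
      ∫ w in Iio x, besselClifford (π ^ 2 * y * (w - x)) * hyperbolaTransform f w 0 := by
    rw [← hpre, funext hk]
    exact hsub.setIntegral_preimage_emb hemb
      (fun w ↦ besselClifford (π ^ 2 * y * (w - x)) * hyperbolaTransform f w 0) _
  have habel := (((tendsto_integral_Ioi_exp_neg_mul_smul hkint).const_mul
    ((-(π ^ 2 * y) : ℝ) : ℂ)).const_add (∫ t, g t)).congr' <| by
      filter_upwards [self_mem_nhdsWithin] with δ hδ
      exact (integral_cexp_div_mul hg hδ _).symm
  have h := tendsto_nhds_unique (tendsto_integral_cexp_neg_div_mul hg hy) habel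
  rw [hyperbolaTransform_cexp_mul, add_zero, hkeq] at h
  rw [h]
  simp [g, hyperbolaTransform, sub_eq_add_neg]

lemma hyperbolaTransform_of_nonpos {f : ℝ → ℂ} (hf : Integrable f) {x y : ℝ} (hy : y ≤ 0)
    (hint : IntegrableOn
      (fun w : ℝ ↦ besselClifford (π ^ 2 * y * (w - x)) * hyperbolaTransform f w 0) (Ioi x)) :
    hyperbolaTransform f x y = hyperbolaTransform f x 0 + π ^ 2 * y *
      ∫ w in Ioi x, besselClifford (π ^ 2 * y * (w - x)) * hyperbolaTransform f w 0 := by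
  let k (w : ℝ) : ℂ := besselClifford (π ^ 2 * y * (w - x)) * hyperbolaTransform f w 0
  have hk (w : ℝ) : besselClifford (π ^ 2 * (-y : ℝ) * (w - (-x : ℝ))) *
      hyperbolaTransform (fun t ↦ f (-t)) w 0 = k (-w) := by
    simp only [k, hyperbolaTransform_comp_neg, neg_zero]
    push_cast
    ring_nf
  have hint' : IntegrableOn (fun w ↦ k (-w)) (Iio (-x)) :=
    IntegrableOn.comp_neg_Iio (f := k) (by simpa only [neg_neg] using hint)
  have h := hyperbolaTransform_of_nonneg hf.comp_neg (x := -x) (neg_nonneg.2 hy)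
    (by simpa only [hk] using hint')
  simp only [hk] at h
  rw [← integral_Iic_eq_integral_Iio, integral_comp_neg_Iic] at h
  simpa [hyperbolaTransform_comp_neg] using h

lemma exists_integrable_hyperbolaTransform_eq_sub {h : ℝ → ℂ} (hsmooth : ContDiff ℝ ∞ h)
    (hsupp : HasCompactSupport h) :
    ∃ f : ℝ → ℂ, Integrable f ∧ ∀ x y : ℝ, hyperbolaTransform f x y = h x - π ^ 2 * |y| *
      ∫ w in {w | 0 < y * (x - w)}, besselClifford (π ^ 2 * y * (w - x)) * h w := by
  obtain ⟨f, hf, hfh⟩ : ∃ f : ℝ → ℂ, Integrable f ∧ ∀ x, hyperbolaTransform f x 0 = h x :=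
    exists_integrable_hyperbolaTransform_zero_right_eq (hsupp.toSchwartzMap hsmooth)
  have hint (x y : ℝ) : Integrable fun w : ℝ ↦ besselClifford (π ^ 2 * y * (w - x)) *
      hyperbolaTransform f w 0 := by
    simp only [hfh]
    have hcont := hsmooth.continuous
    exact Continuous.integrable_of_hasCompactSupport (by fun_prop) hsupp.mul_left
  refine ⟨f, hf, fun x y ↦ ?_⟩
  simp only [← hfh]
  rcases lt_trichotomy y 0 with hy | rfl | hy
  · have hset : {w | 0 < y * (x - w)} = Ioi x := by
      ext w
      simp [mul_pos_iff, hy, hy.not_gt]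
    rw [hyperbolaTransform_of_nonpos hf hy.le (hint x y).integrableOn, hset, abs_of_neg hy]
    simp
  · simp
  · have hset : {w | 0 < y * (x - w)} = Iio x := by
      ext w
      simp [hy]
    rw [hyperbolaTransform_of_nonneg hf hy.le (hint x y).integrableOn, hset, abs_of_pos hy]

/-! ### Separating points from the coordinate half-axes -/

lemma exists_contDiff_integral_smul_ne_zero {E F : Type*}
    [NormedAddCommGroup E] [NormedSpace ℝ E] [FiniteDimensional ℝ E] [MeasurableSpace E]
    [BorelSpace E] [NormedAddCommGroup F] [NormedSpace ℝ F] [CompleteSpace F]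
    {μ : Measure E} [IsFiniteMeasureOnCompacts μ] [μ.IsOpenPosMeasure] {U : Set E}
    (hU : IsOpen U) {k : E → F} (hk : ContinuousOn k U) (hne : ∃ w ∈ U, k w ≠ 0) :
    ∃ h : E → ℝ, ContDiff ℝ ∞ h ∧ HasCompactSupport h ∧ tsupport h ⊆ U ∧
      ∫ w, h w • k w ∂μ ≠ 0 := by
  by_contra! hzero
  obtain ⟨w, hw, hkw⟩ := hne
  have hae : k =ᵐ[μ.restrict U] 0 := (ae_restrict_iff' hU.measurableSet).2 <|
    hU.ae_eq_zero_of_integral_contDiff_smul_eq_zero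
      (hk.locallyIntegrableOn hU.measurableSet) hzero
  exact hkw (Measure.eqOn_open_of_ae_eq hae hU hk continuousOn_const hw)

lemma exists_mem_ne_zero_of_analyticOnNhd {𝕜 E F : Type*} [NontriviallyNormedField 𝕜]
    [NormedAddCommGroup E] [NormedSpace 𝕜 E] [NormedAddCommGroup F] [NormedSpace 𝕜 F]
    [PreconnectedSpace E] {k : E → F} (hk : AnalyticOnNhd 𝕜 k univ) {x : E} (hx : k x ≠ 0)
    {U : Set E} (hU : IsOpen U) (hne : U.Nonempty) : ∃ w ∈ U, k w ≠ 0 := by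
  by_contra! hzero
  obtain ⟨w, hw⟩ := hne
  exact hx (hk.eqOn_zero_of_preconnected_of_eventuallyEq_zero isPreconnected_univ (mem_univ w)
    (Filter.eventuallyEq_of_mem (hU.mem_nhds hw) hzero) (mem_univ x))

lemma exists_contDiff_integral_besselClifford_mul_ne_zero (c x : ℝ) {U : Set ℝ} (hU : IsOpen U)
    (hne : U.Nonempty) :
    ∃ h : ℝ → ℝ, ContDiff ℝ ∞ h ∧ HasCompactSupport h ∧ tsupport h ⊆ U ∧
      ∫ w : ℝ, besselClifford (c * (w - x)) * h w ≠ 0 := by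
  have hk : AnalyticOnNhd ℝ (fun w : ℝ ↦ besselClifford (c * (w - x))) univ := by
    intro w _
    refine ((analyticOnNhd_besselClifford _ (mem_univ _)).restrictScalars (𝕜 := ℝ)).fun_comp ?_
    exact analyticAt_const.mul ((Complex.ofRealCLM.analyticAt w).sub analyticAt_const)
  have hkx : besselClifford (c * (x - x)) ≠ 0 := by simp [besselClifford_zero]
  obtain ⟨h, hsmooth, hsupp, htsupp, hint⟩ := exists_contDiff_integral_smul_ne_zero hU
    (μ := volume) (hk.continuousOn.mono (subset_univ U))
    (exists_mem_ne_zero_of_analyticOnNhd hk hkx hU hne)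
  exact ⟨h, hsmooth, hsupp, htsupp, by simpa [mul_comm] using hint⟩

lemma exists_contDiff_sub_integral_besselClifford_ne_zero {N : Set ℝ} (hN : IsClosed N)
    (hdense : Dense Nᶜ) {x y : ℝ} (hxy : y < 0 ∨ 0 < x ∧ (y ≠ 0 ∨ x ∉ N)) :
    ∃ h : ℝ → ℝ, ContDiff ℝ ∞ h ∧ HasCompactSupport h ∧ tsupport h ⊆ Ioi 0 ∩ Nᶜ ∧
      h x - π ^ 2 * |y| *
        ∫ w in {w | 0 < y * (x - w)}, besselClifford (π ^ 2 * y * (w - x)) * h w ≠ 0 := by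
  rcases eq_or_ne y 0 with rfl | hy
  · have hx : Ioi 0 ∩ Nᶜ ∈ 𝓝 x := (isOpen_Ioi.inter hN.isOpen_compl).mem_nhds <| by
      simpa using hxy
    obtain ⟨h, htsupp, hsupp, hsmooth, -, hhx⟩ := exists_contDiff_tsupport_subset (n := ⊤) hx
    exact ⟨h, hsmooth, hsupp, htsupp, by simp [hhx]⟩
  · have hV : IsOpen (Ioi 0 ∩ {w | 0 < y * (x - w)}) :=
      isOpen_Ioi.inter (isOpen_lt continuous_const (by fun_prop))
    have hVne : (Ioi 0 ∩ {w | 0 < y * (x - w)}).Nonempty := by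
      rcases hy.lt_or_gt with hy | hy
      · refine ⟨max x 0 + 1, mem_Ioi.2 (by positivity), mul_pos_of_neg_of_neg hy ?_⟩
        linarith [le_max_left x 0]
      · have hx : 0 < x := (hxy.resolve_left hy.not_gt).1
        exact ⟨x / 2, half_pos hx, mul_pos hy (sub_pos.2 (half_lt_self hx))⟩
    obtain ⟨h, hsmooth, hsupp, htsupp, hint⟩ :=
      exists_contDiff_integral_besselClifford_mul_ne_zero (π ^ 2 * y) x
        (hV.inter hN.isOpen_compl) (hdense.inter_open_nonempty _ hV hVne)
    refine ⟨h, hsmooth, hsupp, htsupp.trans fun w hw ↦ ⟨hw.1.1, hw.2⟩, ?_⟩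
    have hsub : Function.support h ⊆ {w | 0 < y * (x - w)} :=
      (subset_tsupport h).trans fun w hw ↦ (htsupp hw).1.2
    have hhx : h x = 0 := Function.notMem_support.1 fun hx ↦ by simpa using hsub hx
    rw [hhx, Complex.ofReal_zero, setIntegral_eq_integral_of_forall_compl_eq_zero fun w hw ↦ by
      rw [Function.notMem_support.1 fun hmem ↦ hw (hsub hmem), Complex.ofReal_zero, mul_zero]]
    simpa [pi_ne_zero, hy] using hint

theorem exists_integrable_hyperbolaTransform_ne_zero {N : Set ℝ} (hN : IsClosed N)
    (hdense : Dense Nᶜ) {x y : ℝ} (hxy : y < 0 ∨ 0 < x ∧ (y ≠ 0 ∨ x ∉ N)) :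
    ∃ f : ℝ → ℂ, Integrable f ∧ (∀ w ∈ N, hyperbolaTransform f w 0 = 0) ∧
      (∀ v, 0 ≤ v → hyperbolaTransform f 0 v = 0) ∧ hyperbolaTransform f x y ≠ 0 := by
  obtain ⟨h, hsmooth, hsupp, htsupp, hne⟩ :=
    exists_contDiff_sub_integral_besselClifford_ne_zero hN hdense hxy
  obtain ⟨f, hf, hfh⟩ := exists_integrable_hyperbolaTransform_eq_sub (h := fun w ↦ (h w : ℂ))
    (Complex.ofRealCLM.contDiff.comp hsmooth) (hsupp.comp_left Complex.ofReal_zero)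
  have hzero {w : ℝ} (hw : w ∉ Ioi 0 ∩ Nᶜ) : (h w : ℂ) = 0 :=
    Complex.ofReal_eq_zero.2 <| image_eq_zero_of_notMem_tsupport fun hmem ↦ hw (htsupp hmem)
  refine ⟨f, hf, fun w hw ↦ ?_, fun v hv ↦ ?_, by rwa [hfh]⟩
  · simp [hfh, hzero fun hmem ↦ hmem.2 hw]
  · rw [hfh, hzero (by simp), setIntegral_eq_zero_of_forall_eq_zero]
    · simp
    · intro w hw
      have hw0 : w < 0 := by simpa using pos_of_mul_pos_right hw hv
      rw [hzero fun hmem ↦ hw0.not_gt hmem.1, mul_zero]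

lemma isClosed_range_mul_natCast (α : ℝ) : IsClosed (range fun n : ℕ ↦ α * n) := by
  rcases eq_or_ne α 0 with rfl | hα
  · simp
  · exact ((Homeomorph.mulLeft₀ α hα).isClosedEmbedding.comp
      Nat.isClosedEmbedding_coe_real).isClosed_range

lemma exists_integrable_hyperbolaTransform_ne_zero_of_neg_or_pos {α β x y : ℝ} (hβ : 0 ≤ β)
    (hxy : y < 0 ∨ 0 < x ∧ (y ≠ 0 ∨ x ∉ range fun n : ℕ ↦ α * n)) :
    ∃ f : ℝ → ℂ, Integrable f ∧ (∀ m : ℕ, hyperbolaTransform f (α * m) 0 = 0) ∧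
      (∀ n : ℕ, hyperbolaTransform f 0 (β * n) = 0) ∧ hyperbolaTransform f x y ≠ 0 := by
  obtain ⟨f, hf, hN, hpos, hne⟩ := exists_integrable_hyperbolaTransform_ne_zero
    (isClosed_range_mul_natCast α) ((countable_range _).dense_compl ℝ) hxy
  exact ⟨f, hf, fun m ↦ hN _ (mem_range_self m), fun n ↦ hpos _ (by positivity), hne⟩

theorem exists_integrable_hyperbolaTransform_ne_zero_of_notMem_latticeCross {α β a b : ℝ}
    (hα : 0 ≤ α) (hβ : 0 ≤ β) (hfst : ∀ m : ℕ, (a, b) ≠ (α * m, 0))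
    (hsnd : ∀ n : ℕ, (a, b) ≠ (0, β * n)) :
    ∃ f : ℝ → ℂ, Integrable f ∧ (∀ m : ℕ, hyperbolaTransform f (α * m) 0 = 0) ∧
      (∀ n : ℕ, hyperbolaTransform f 0 (β * n) = 0) ∧ hyperbolaTransform f a b ≠ 0 := by
  have hab : (b < 0 ∨ 0 < a ∧ (b ≠ 0 ∨ a ∉ range fun n : ℕ ↦ α * n)) ∨
      (a < 0 ∨ 0 < b ∧ (a ≠ 0 ∨ b ∉ range fun n : ℕ ↦ β * n)) := by
    by_contra! h
    obtain ⟨⟨hb, ha'⟩, ha, hb'⟩ := h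
    rcases ha.eq_or_lt with rfl | ha
    · rcases hb.eq_or_lt with rfl | hb
      · exact hfst 0 (by simp)
      · obtain ⟨n, hn⟩ := (hb' hb).2
        exact hsnd n (by simp [hn])
    · obtain ⟨hb0, m, hm⟩ := ha' ha
      exact hfst m (by simp [hb0, hm])
  rcases hab with hab | hab
  · exact exists_integrable_hyperbolaTransform_ne_zero_of_neg_or_pos hβ hab
  · obtain ⟨f, hf, hfβ, hfα, hne⟩ :=
      exists_integrable_hyperbolaTransform_ne_zero_of_neg_or_pos hα hab
    refine ⟨fun t ↦ |-(t ^ 2)⁻¹| • f t⁻¹, integrable_abs_deriv_inv_smul_comp_inv.2 hf, ?_⟩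
    simp only [hyperbolaTransform_abs_deriv_inv_smul_comp_inv]
    exact ⟨hfα, hfβ, hne⟩

/-- Time-like quarter lattice-cross (normalized `α = 1`, `M = 2π`): the
Zariski closure of `(ℤ≥0 × {0}) ∪ ({0} × βℤ≥1)` contains no extraneous
points. -/
theorem stmt_7 (β : ℝ) (hβ : 0 < β) (a b : ℝ)
    (h1 : ¬ ∃ m : ℕ, a = m ∧ b = 0)
    (h2 : ¬ ∃ n : ℕ, 1 ≤ n ∧ a = 0 ∧ b = β * n) :
    ∃ f : ℝ → ℂ, Integrable f ∧
      (∀ m : ℕ, ∫ t : ℝ, Complex.exp (Complex.I * π * m * t) * f t = 0) ∧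
      (∀ n : ℕ, 1 ≤ n → ∫ t : ℝ, Complex.exp (Complex.I * π * β * n / t) * f t = 0) ∧
      (∫ t : ℝ, Complex.exp (Complex.I * π * (a * t + b / t)) * f t) ≠ 0 := by
  have hα_axis (m : ℕ) : (a, b) ≠ ((1 : ℝ) * m, 0) := fun h ↦ h1 ⟨m, by simpa using h⟩
  have hβ_axis (n : ℕ) : (a, b) ≠ (0, β * n) := fun h ↦ by
    rcases n.eq_zero_or_pos with rfl | hn
    · exact h1 ⟨0, by simpa using h⟩
    · exact h2 ⟨n, hn, by simpa using h⟩
  obtain ⟨f, hf, hfα, hfβ, hne⟩ :=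
    exists_integrable_hyperbolaTransform_ne_zero_of_notMem_latticeCross zero_le_one hβ.le
      hα_axis hβ_axis
  refine ⟨f, hf, fun m ↦ ?_, fun n _ ↦ ?_, hne⟩
  · simpa [hyperbolaTransform, mul_assoc] using hfα m
  · simpa [hyperbolaTransform, mul_assoc, mul_div_assoc] using hfβ n
end
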